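/- arXiv:2108.05474 — 5 statements merged into one kernel-verified Lean document; each statement's English description precedes it below -/
import Mathlib

section
/- Fix ε > 0. There exists c > 0 such that for all sufficiently large k: for every k-DFA D with at most k² states, the number of permutations τ ∈ S_k with Σ_{j=1}^k Y_j(τ) < (1/4 − ε)k² is strictly less than exp(−ck)·k!; equivalently, if τ ∈ S_k is uniformly random then P(Σ_{j=1}^k Y_j(τ) < (1/4 − ε)k²) < exp(−ck). -/
/-- A weighted DFA on the alphabet `[k]` (modelled as `Fin k`) with state type `V`:
a transition function, a root state, and a cost function into `ℕ∞`. -/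
structure WDFA (k : ℕ) (V : Type*) where
  trans : V → Fin k → V
  root : V
  cost : V → Fin k → ℕ∞

/-- The final state of the walk from `v` reading the word `w`. -/
def WDFA.walkEnd {k : ℕ} {V : Type*} (D : WDFA k V) : V → List (Fin k) → V
  | v, [] => v
  | v, t :: w => D.walkEnd (D.trans v t) w

/-- The cost of reading the word `w` starting from state `v`. -/
def WDFA.wordCost {k : ℕ} {V : Type*} (D : WDFA k V) : V → List (Fin k) → ℕ∞
  | _, [] => 0
  | v, t :: w => D.cost v t + D.wordCost (D.trans v t) w

/-- A `k`-DFA: a weighted DFA on alphabet `[k]` in which, at every state `v`, the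
costs `c(v, ·)` form a bijection onto `{1, …, k}`. -/
def WDFA.IsKDFA {k : ℕ} {V : Type*} (D : WDFA k V) : Prop :=
  ∀ v : V, ∃ π : Equiv.Perm (Fin k), ∀ t : Fin k, D.cost v t = (((π t : ℕ) + 1 : ℕ) : ℕ∞)

/-- A permutation `τ ∈ S_k` read as the word `τ(1), …, τ(k)`. -/
def permWord {k : ℕ} (τ : Equiv.Perm (Fin k)) : List (Fin k) :=
  (List.finRange k).map τ

/-- `Y_j(τ)` for a `k`-DFA `D` and a permutation `τ`: with `v_{j−1}` the state reached
from the root after reading the first `j−1` letters of `τ`, and `C_j = c(v_{j−1}, τ(j))`,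
`Y_j(τ)` is the number of previously read letters `τ(j')`, `j' < j`, whose cost at
`v_{j−1}` is below `C_j`. (Here `j : Fin k` represents the index `j+1 ∈ {1,…,k}`.) -/
noncomputable def Yval {k : ℕ} {V : Type*} (D : WDFA k V) (τ : Equiv.Perm (Fin k))
    (j : Fin k) : ℕ :=
  Nat.card {j' : Fin k // j' < j ∧
    D.cost (D.walkEnd D.root ((permWord τ).take (j : ℕ))) (τ j') <
    D.cost (D.walkEnd D.root ((permWord τ).take (j : ℕ))) (τ j)}

/-!
Reveal the letters of a uniformly random permutation one at a time. Given the first `j` letters, the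
state reached is determined, `Y_j` is the value at the next letter of a function taking values in
`[0, k]`, and its conditional mean is `m_j = j / 2 - X_j / (k - j)`, where `X_j` is the sum of the
centred costs, at the current state, of the letters read so far.

Azuma's inequality gives `∑ Y_j ≥ ∑ m_j - o(k²)` outside an event of exponentially small
probability. For a *fixed* state and a fixed `j`, `X_j` is a centred sum of a sample without
replacement, so `X_j = o(k²)` outside an exponentially small event as well, and a union bound over
states and positions extends this to the states actually visited. Then `m_j ≥ j / 2 - o(k)` unless
`j` is close to `k`, and these lower bounds add up to `k² / 4 - o(k²)`.

Both exponential moment bounds rest on one invariance: a uniform permutation remains uniform when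
the letter at position `j` is exchanged with the letter at a random later position.
-/

open Finset Equiv Filter
open scoped BigOperators Nat

section Resampling

lemma sum_le_sum_of_forall_sum_mul_right_le {G ι : Type*} [Group G] [Fintype G] {Φ Ψ : G → ℝ}
    {S : Finset ι} (hS : S.Nonempty) (g : ι → G)
    (h : ∀ x, ∑ i ∈ S, Φ (x * g i) ≤ #S * Ψ x) : ∑ x, Φ x ≤ ∑ x, Ψ x := by
  have hS' : (0 : ℝ) < #S := by exact_mod_cast hS.card_pos
  refine le_of_mul_le_mul_left ?_ hS'
  calc #S * ∑ x, Φ x = ∑ i ∈ S, ∑ x, Φ (x * g i) := by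
        simp only [Fintype.sum_equiv (Equiv.mulRight (g _)) (fun x ↦ Φ (x * g _)) Φ (fun _ ↦ rfl),
          sum_const, nsmul_eq_mul]
    _ = ∑ x, ∑ i ∈ S, Φ (x * g i) := sum_comm
    _ ≤ ∑ x, #S * Ψ x := sum_le_sum fun x _ ↦ h x
    _ = #S * ∑ x, Ψ x := (mul_sum ..).symm

lemma mul_swap_apply_of_notMem {α : Type*} [DecidableEq α] {s : Finset α} {a i x : α}
    (ha : a ∉ s) (hi : i ∉ s) (hx : x ∈ s) (τ : Perm α) : (τ * swap a i) x = τ x := by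
  rw [Perm.mul_apply, swap_apply_of_ne_of_ne]
  · exact ne_of_mem_of_not_mem hx ha
  · exact ne_of_mem_of_not_mem hx hi

end Resampling

section ExponentialMoments

lemma cosh_add_mul_le {z : ℝ} (hz : |z| ≤ 1) (x δ : ℝ) :
    Real.cosh (x + z * δ) ≤ Real.cosh δ * Real.cosh x + z * (Real.sinh δ * Real.sinh x) := by
  have hpos := Real.exp_mul_le_cosh_add_mul_sinh hz δ
  have hneg := Real.exp_mul_le_cosh_add_mul_sinh (t := -z) (by rwa [abs_neg]) δ
  calc Real.cosh (x + z * δ)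
      = (Real.exp x * Real.exp (z * δ) + Real.exp (-x) * Real.exp (-z * δ)) / 2 := by
        rw [Real.cosh_eq, ← Real.exp_add, ← Real.exp_add]; ring_nf
    _ ≤ (Real.exp x * (Real.cosh δ + z * Real.sinh δ) +
          Real.exp (-x) * (Real.cosh δ + -z * Real.sinh δ)) / 2 := by gcongr
    _ = Real.cosh δ * Real.cosh x + z * (Real.sinh δ * Real.sinh x) := by
        rw [Real.cosh_eq x, Real.sinh_eq x]; ring

lemma exp_abs_le_two_mul_cosh (x : ℝ) : Real.exp |x| ≤ 2 * Real.cosh x := by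
  rw [← Real.cosh_abs, Real.cosh_eq]
  linarith [Real.exp_pos (-|x|)]

lemma sinh_mul_sinh_mul_mul_self_nonneg (δ x : ℝ) :
    0 ≤ Real.sinh δ * Real.sinh (δ * x) * x := by
  rcases le_total 0 δ with hδ | hδ <;> rcases le_total 0 x with hx | hx
  · have := Real.sinh_nonneg_iff.2 hδ
    have := Real.sinh_nonneg_iff.2 (mul_nonneg hδ hx)
    positivity
  · exact mul_nonneg_of_nonpos_of_nonpos (mul_nonpos_of_nonneg_of_nonpos
      (Real.sinh_nonneg_iff.2 hδ)
      (Real.sinh_nonpos_iff.2 (mul_nonpos_of_nonneg_of_nonpos hδ hx))) hx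
  · exact mul_nonneg (mul_nonneg_of_nonpos_of_nonpos (Real.sinh_nonpos_iff.2 hδ)
      (Real.sinh_nonpos_iff.2 (mul_nonpos_of_nonpos_of_nonneg hδ hx))) hx
  · exact mul_nonneg_of_nonpos_of_nonpos (mul_nonpos_of_nonpos_of_nonneg
      (Real.sinh_nonpos_iff.2 hδ)
      (Real.sinh_nonneg_iff.2 (mul_nonneg_of_nonpos_of_nonpos hδ hx))) hx

lemma cosh_pow_le_exp {n N : ℕ} (hn : n ≤ N) (δ : ℝ) :
    Real.cosh δ ^ n ≤ Real.exp (δ ^ 2 / 2 * N) :=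
  calc Real.cosh δ ^ n ≤ Real.cosh δ ^ N := pow_le_pow_right₀ (Real.one_le_cosh δ) hn
    _ ≤ Real.exp (δ ^ 2 / 2) ^ N := by gcongr; exact Real.cosh_le_exp_half_sq δ
    _ = Real.exp (δ ^ 2 / 2 * N) := by rw [← Real.exp_nat_mul, mul_comm]

/- The exponential Markov inequality at parameter `δ`, the optimal one for a variance proxy `n`. -/
lemma card_filter_le_of_sum_exp_le {Ω : Type*} [Fintype Ω] {X : Ω → ℝ} {δ n M : ℝ} (hδ : 0 ≤ δ)
    (h : ∑ ω, Real.exp (δ * X ω) ≤ Real.exp (δ ^ 2 / 2 * n) * M) :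
    (#{ω | δ * n ≤ X ω} : ℝ) ≤ Real.exp (-(δ ^ 2 / 2) * n) * M := by
  refine le_of_mul_le_mul_right ?_ (Real.exp_pos (δ * (δ * n)))
  calc #{ω | δ * n ≤ X ω} * Real.exp (δ * (δ * n))
      = ∑ ω with δ * n ≤ X ω, Real.exp (δ * (δ * n)) := by rw [sum_const, nsmul_eq_mul]
    _ ≤ ∑ ω with δ * n ≤ X ω, Real.exp (δ * X ω) := by
        refine sum_le_sum fun ω hω ↦ ?_
        gcongr
        exact (mem_filter.1 hω).2
    _ ≤ ∑ ω, Real.exp (δ * X ω) :=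
        sum_le_sum_of_subset_of_nonneg (filter_subset _ _) fun _ _ _ ↦ (Real.exp_pos _).le
    _ ≤ Real.exp (δ ^ 2 / 2 * n) * M := h
    _ = Real.exp (-(δ ^ 2 / 2) * n) * M * Real.exp (δ * (δ * n)) := by
        rw [mul_right_comm, ← Real.exp_add]; ring_nf

end ExponentialMoments

section SamplingWithoutReplacement

variable {α : Type*} [Fintype α] [DecidableEq α] {f : α → ℝ}

/- `cosh` rather than `exp`: the conditional drift of the partial sum `x` has sign opposite to `x`,
so it can only decrease the even function `cosh`. -/
lemma sum_cosh_sum_apply_insert_le (hf : ∀ a, |f a| ≤ 1) (hf₀ : ∑ a, f a = 0) (δ : ℝ)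
    {s : Finset α} {a : α} (ha : a ∉ s) :
    ∑ τ : Perm α, Real.cosh (δ * ∑ i ∈ insert a s, f (τ i)) ≤
      ∑ τ : Perm α, Real.cosh δ * Real.cosh (δ * ∑ i ∈ s, f (τ i)) := by
  refine sum_le_sum_of_forall_sum_mul_right_le (S := sᶜ) ⟨a, mem_compl.2 ha⟩ (swap a) fun τ ↦ ?_
  set x := ∑ i ∈ s, f (τ i)
  have hresample : ∀ i ∈ sᶜ, ∑ l ∈ insert a s, f ((τ * swap a i) l) = x + f (τ i) := by
    intro i hi
    rw [sum_insert ha, add_comm, Perm.mul_apply, swap_apply_left]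
    congr 1
    exact sum_congr rfl fun l hl ↦ by rw [mul_swap_apply_of_notMem ha (mem_compl.1 hi) hl]
  have hdrift : ∑ i ∈ sᶜ, f (τ i) = -x := by
    rw [eq_neg_iff_add_eq_zero, sum_compl_add_sum, Equiv.sum_comp τ f, hf₀]
  calc ∑ i ∈ sᶜ, Real.cosh (δ * ∑ l ∈ insert a s, f ((τ * swap a i) l))
      ≤ ∑ i ∈ sᶜ, (Real.cosh δ * Real.cosh (δ * x) +
          f (τ i) * (Real.sinh δ * Real.sinh (δ * x))) := by
        refine sum_le_sum fun i hi ↦ ?_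
        rw [hresample i hi, mul_add, mul_comm δ (f _)]
        exact cosh_add_mul_le (hf _) _ _
    _ = #sᶜ * (Real.cosh δ * Real.cosh (δ * x)) - Real.sinh δ * Real.sinh (δ * x) * x := by
        rw [sum_add_distrib, sum_const, nsmul_eq_mul, ← sum_mul, hdrift]; ring
    _ ≤ #sᶜ * (Real.cosh δ * Real.cosh (δ * x)) :=
        sub_le_self _ (sinh_mul_sinh_mul_mul_self_nonneg δ x)

lemma sum_cosh_sum_apply_le (hf : ∀ a, |f a| ≤ 1) (hf₀ : ∑ a, f a = 0) (δ : ℝ) (s : Finset α) :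
    ∑ τ : Perm α, Real.cosh (δ * ∑ i ∈ s, f (τ i)) ≤ Real.cosh δ ^ #s * (Fintype.card α)! := by
  induction s using Finset.induction_on with
  | empty => simp [Fintype.card_perm]
  | insert a s ha ih =>
    refine (sum_cosh_sum_apply_insert_le hf hf₀ δ ha).trans ?_
    rw [← mul_sum, card_insert_of_notMem ha, pow_succ', mul_assoc]
    gcongr

theorem card_filter_le_abs_sum_apply (hf : ∀ a, |f a| ≤ 1) (hf₀ : ∑ a, f a = 0) {η : ℝ}
    (hη : 0 ≤ η) (s : Finset α) :
    (#{τ : Perm α | η * Fintype.card α ≤ |∑ i ∈ s, f (τ i)|} : ℝ) ≤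
      Real.exp (-(η ^ 2 / 2) * Fintype.card α) * (2 * (Fintype.card α)!) := by
  refine card_filter_le_of_sum_exp_le hη ?_
  calc ∑ τ : Perm α, Real.exp (η * |∑ i ∈ s, f (τ i)|)
      ≤ ∑ τ : Perm α, 2 * Real.cosh (η * ∑ i ∈ s, f (τ i)) := by
        refine sum_le_sum fun τ _ ↦ ?_
        simpa only [abs_mul, abs_of_nonneg hη] using
          exp_abs_le_two_mul_cosh (η * ∑ i ∈ s, f (τ i))
    _ ≤ 2 * (Real.cosh η ^ #s * (Fintype.card α)!) := by
        rw [← mul_sum]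
        gcongr
        exact sum_cosh_sum_apply_le hf hf₀ η s
    _ ≤ 2 * (Real.exp (η ^ 2 / 2 * Fintype.card α) * (Fintype.card α)!) := by
        gcongr
        exact cosh_pow_le_exp (card_le_univ s) η
    _ = Real.exp (η ^ 2 / 2 * Fintype.card α) * (2 * (Fintype.card α)!) := by ring

end SamplingWithoutReplacement

/-- A function of a permutation `τ` is predictable at `j` if it depends only on the values of `τ` at
positions before `j`, i.e. it is measurable with respect to the first letters of the word `τ`. -/
def PredictableAt {α β : Type*} [LT α] (j : α) (f : Perm α → β) : Prop :=
  ∀ ⦃σ τ : Perm α⦄, (∀ i < j, σ i = τ i) → f σ = f τ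

section Azuma

variable {α : Type*} [Fintype α] [LinearOrder α] [LocallyFiniteOrderTop α]
  {Z : α → Perm α → α → ℝ}

lemma sum_exp_sum_predictable_insert_le (hZ : ∀ j, PredictableAt j (Z j))
    (hZ₁ : ∀ j τ t, |Z j τ t| ≤ 1) (hZ₀ : ∀ j τ, ∑ i ∈ Ici j, Z j τ (τ i) ≤ 0) {δ : ℝ}
    (hδ : 0 ≤ δ) {s : Finset α} {a : α} (ha : ∀ j ∈ s, j < a) :
    ∑ τ, Real.exp (δ * ∑ j ∈ insert a s, Z j τ (τ j)) ≤
      ∑ τ, Real.cosh δ * Real.exp (δ * ∑ j ∈ s, Z j τ (τ j)) := by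
  have has : a ∉ s := fun h ↦ (ha a h).false
  refine sum_le_sum_of_forall_sum_mul_right_le (S := Ici a) nonempty_Ici (swap a) fun τ ↦ ?_
  have hswap : ∀ i ∈ Ici a, ∀ l < a, (τ * swap a i) l = τ l := fun i hi l hl ↦
    mul_swap_apply_of_notMem (s := {l}) (by simpa using hl.ne')
      (by simpa using (hl.trans_le (mem_Ici.1 hi)).ne') (mem_singleton_self l) τ
  have hresample : ∀ i ∈ Ici a, ∑ j ∈ insert a s, Z j (τ * swap a i) ((τ * swap a i) j) =
      ∑ j ∈ s, Z j τ (τ j) + Z a τ (τ i) := by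
    intro i hi
    rw [sum_insert has, add_comm, hZ a (hswap i hi), Perm.mul_apply, swap_apply_left]
    congr 1
    refine sum_congr rfl fun j hj ↦ ?_
    rw [hZ j fun l hl ↦ hswap i hi l (hl.trans (ha j hj)), hswap i hi j (ha j hj)]
  set E := Real.exp (δ * ∑ j ∈ s, Z j τ (τ j))
  calc ∑ i ∈ Ici a, Real.exp (δ * ∑ j ∈ insert a s, Z j (τ * swap a i) ((τ * swap a i) j))
      = ∑ i ∈ Ici a, E * Real.exp (Z a τ (τ i) * δ) := by
        refine sum_congr rfl fun i hi ↦ ?_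
        rw [hresample i hi, mul_add, Real.exp_add, mul_comm δ (Z a τ _)]
    _ ≤ ∑ i ∈ Ici a, E * (Real.cosh δ + Z a τ (τ i) * Real.sinh δ) := by
        gcongr with i
        exact Real.exp_mul_le_cosh_add_mul_sinh (hZ₁ a τ (τ i)) δ
    _ = #(Ici a) * (Real.cosh δ * E) + E * Real.sinh δ * ∑ i ∈ Ici a, Z a τ (τ i) := by
        rw [← mul_sum, sum_add_distrib, sum_const, nsmul_eq_mul, ← sum_mul]; ring
    _ ≤ #(Ici a) * (Real.cosh δ * E) :=
        add_le_of_nonpos_right (mul_nonpos_of_nonneg_of_nonpos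
          (mul_nonneg (Real.exp_pos _).le (Real.sinh_nonneg_iff.2 hδ)) (hZ₀ a τ))

lemma sum_exp_sum_predictable_le (hZ : ∀ j, PredictableAt j (Z j))
    (hZ₁ : ∀ j τ t, |Z j τ t| ≤ 1) (hZ₀ : ∀ j τ, ∑ i ∈ Ici j, Z j τ (τ i) ≤ 0) {δ : ℝ}
    (hδ : 0 ≤ δ) (s : Finset α) :
    ∑ τ, Real.exp (δ * ∑ j ∈ s, Z j τ (τ j)) ≤ Real.cosh δ ^ #s * (Fintype.card α)! := by
  induction s using Finset.induction_on_max with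
  | empty => simp [Fintype.card_perm]
  | insert a s ha ih =>
    refine (sum_exp_sum_predictable_insert_le hZ hZ₁ hZ₀ hδ ha).trans ?_
    rw [← mul_sum, card_insert_of_notMem fun h ↦ (ha a h).false, pow_succ', mul_assoc]
    gcongr

theorem card_filter_le_sum_predictable (hZ : ∀ j, PredictableAt j (Z j))
    (hZ₁ : ∀ j τ t, |Z j τ t| ≤ 1) (hZ₀ : ∀ j τ, ∑ i ∈ Ici j, Z j τ (τ i) ≤ 0) {ξ : ℝ}
    (hξ : 0 ≤ ξ) :
    (#{τ | ξ * Fintype.card α ≤ ∑ j, Z j τ (τ j)} : ℝ) ≤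
      Real.exp (-(ξ ^ 2 / 2) * Fintype.card α) * (Fintype.card α)! := by
  refine card_filter_le_of_sum_exp_le hξ ((sum_exp_sum_predictable_le hZ hZ₁ hZ₀ hξ univ).trans ?_)
  gcongr
  exact cosh_pow_le_exp le_rfl ξ

end Azuma

section CountingBelow

variable {α : Type*}

lemma sum_card_filter_lt {β : Type*} [LinearOrder β] {g : α → β} (hg : g.Injective)
    (s : Finset α) : ∑ x ∈ s, #{y ∈ s | g y < g x} = (#s).choose 2 := by
  classical
  induction s using Finset.induction_on_max_value g with
  | empty => simp
  | insert a s ha hmax ih =>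
    have hlt : ∀ x ∈ s, g x < g a := fun x hx ↦
      (hmax x hx).lt_of_ne (hg.ne (ne_of_mem_of_not_mem hx ha))
    have htop : #{y ∈ insert a s | g y < g a} = #s := by
      rw [filter_insert, if_neg (lt_irrefl _), filter_true_of_mem hlt]
    have hrest : ∀ x ∈ s, #{y ∈ insert a s | g y < g x} = #{y ∈ s | g y < g x} := fun x hx ↦ by
      rw [filter_insert, if_neg (hlt x hx).not_gt]
    rw [sum_insert ha, htop, sum_congr rfl hrest, ih, card_insert_of_notMem ha,
      Nat.choose_succ_succ', Nat.choose_one_right]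

lemma sum_compl_card_filter_lt_add_choose [Fintype α] [DecidableEq α] {k : ℕ}
    (g : α ≃ Fin k) (s : Finset α) :
    ∑ x ∈ sᶜ, #{y ∈ s | g y < g x} + (#s).choose 2 = ∑ y ∈ s, (k - 1 - g y) := by
  rw [← sum_card_filter_lt g.injective s, sum_compl_add_sum]
  calc ∑ x, #{y ∈ s | g y < g x} = ∑ y ∈ s, #{x | g y < g x} :=
        (sum_card_bipartiteAbove_eq_sum_card_bipartiteBelow fun y x ↦ g y < g x).symm
    _ = ∑ y ∈ s, (k - 1 - g y) := by
        refine sum_congr rfl fun y _ ↦ ?_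
        rw [← Fin.card_Ioi, ← card_map g.symm.toEmbedding]
        congr 1
        ext x
        simp [mem_map_equiv]

end CountingBelow

section CentredRank

variable {k : ℕ}

/-- The rank `x ∈ {0, …, k - 1}` centred at its average `(k - 1) / 2` and divided by `k`, so that it
lies in `[-1, 1]`. -/
noncomputable def centredRank (x : Fin k) : ℝ := (x - ((k : ℝ) - 1) / 2) / k

lemma abs_centredRank_le_one (x : Fin k) : |centredRank x| ≤ 1 := by
  have hx : (x : ℝ) + 1 ≤ k := by exact_mod_cast x.2
  rw [centredRank, abs_div, Nat.abs_cast]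
  refine div_le_one_of_le₀ (abs_le.2 ⟨?_, ?_⟩) (Nat.cast_nonneg k) <;>
    linarith [Nat.cast_nonneg (α := ℝ) (x : ℕ)]

lemma sum_fin_val_eq (k : ℕ) : ∑ x : Fin k, (x : ℝ) = k * ((k : ℝ) - 1) / 2 := by
  induction k with
  | zero => simp
  | succ k ih => simp [Fin.sum_univ_castSucc, ih]; ring

lemma sum_centredRank (k : ℕ) : ∑ x : Fin k, centredRank x = 0 := by
  simp only [centredRank, ← sum_div, sum_sub_distrib, sum_fin_val_eq, sum_const, card_univ,
    Fintype.card_fin, nsmul_eq_mul]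
  ring

lemma sum_compl_card_filter_lt {α : Type*} [Fintype α] [DecidableEq α] (g : α ≃ Fin k)
    (s : Finset α) :
    (∑ x ∈ sᶜ, #{y ∈ s | g y < g x} : ℝ) =
      #s * ((k : ℝ) - #s) / 2 - k * ∑ y ∈ s, centredRank (g y) := by
  have hcount : (∑ x ∈ sᶜ, #{y ∈ s | g y < g x} : ℝ) + #s * ((#s : ℝ) - 1) / 2 =
      ∑ y ∈ s, ((k : ℝ) - 1 - g y) := by
    rw [← Nat.cast_choose_two ℝ, ← Nat.cast_sum, ← Nat.cast_add,
      sum_compl_card_filter_lt_add_choose g s, Nat.cast_sum]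
    refine sum_congr rfl fun y _ ↦ ?_
    have := (g y).2
    rw [Nat.cast_sub (by omega), Nat.cast_sub (by omega), Nat.cast_one]
  have hrank : ∀ y, (k : ℝ) - 1 - g y = ((k : ℝ) - 1) / 2 - k * centredRank (g y) := fun y ↦ by
    have : (k : ℝ) ≠ 0 := by exact_mod_cast (g y).pos.ne'
    rw [centredRank]
    field_simp
    ring
  simp only [hrank, sum_sub_distrib, ← mul_sum, sum_const, nsmul_eq_mul] at hcount
  linear_combination hcount

end CentredRank

section EarlierBelow

variable {k : ℕ}

/-- The number of letters read before position `j` in the word `τ` that `π` ranks below the letter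
`t`. -/
def earlierBelow (π : Perm (Fin k)) (j : Fin k) (τ : Perm (Fin k)) (t : Fin k) : ℕ :=
  #{i ∈ Iio j | π (τ i) < π t}

/-- The conditional expectation of `earlierBelow π j τ (τ j)` given the letters of `τ` before `j`:
the average over the letters that have not been read. -/
noncomputable def meanEarlierBelow (π : Perm (Fin k)) (j : Fin k) (τ : Perm (Fin k)) : ℝ :=
  𝔼 i ∈ Ici j, (earlierBelow π j τ (τ i) : ℝ)

lemma earlierBelow_le (π : Perm (Fin k)) (j : Fin k) (τ : Perm (Fin k)) (t : Fin k) :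
    earlierBelow π j τ t ≤ k :=
  (card_le_univ _).trans_eq (Fintype.card_fin k)

lemma meanEarlierBelow_nonneg (π : Perm (Fin k)) (j : Fin k) (τ : Perm (Fin k)) :
    0 ≤ meanEarlierBelow π j τ :=
  expect_nonneg fun _ _ ↦ Nat.cast_nonneg _

lemma meanEarlierBelow_le (π : Perm (Fin k)) (j : Fin k) (τ : Perm (Fin k)) :
    meanEarlierBelow π j τ ≤ k :=
  expect_le nonempty_Ici fun _ _ ↦ by exact_mod_cast earlierBelow_le ..

lemma earlierBelow_predictableAt (π : Perm (Fin k)) (j : Fin k) :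
    PredictableAt j (earlierBelow π j) := fun σ τ h ↦ by
  funext t
  exact congrArg card (filter_congr fun i hi ↦ by rw [h i (mem_Iio.1 hi)])

lemma cast_card_Ici (j : Fin k) : (#(Ici j) : ℝ) = k - j := by
  rw [Fin.card_Ici, Nat.cast_sub j.2.le]

lemma sub_mul_meanEarlierBelow (π : Perm (Fin k)) (j : Fin k) (τ : Perm (Fin k)) :
    ((k : ℝ) - j) * meanEarlierBelow π j τ =
      ((k : ℝ) - j) * (j / 2) - k * ∑ i ∈ Iio j, centredRank (π (τ i)) := by
  have hcompl : (Iio j)ᶜ = Ici j := by ext; simp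
  have h := sum_compl_card_filter_lt (τ.trans π) (Iio j)
  rw [hcompl, Fin.card_Iio] at h
  rw [meanEarlierBelow, ← cast_card_Ici, card_mul_expect, cast_card_Ici]
  refine h.trans ?_
  simp only [Equiv.trans_apply]
  ring

lemma meanEarlierBelow_predictableAt (π : Perm (Fin k)) (j : Fin k) :
    PredictableAt j (meanEarlierBelow π j) := fun σ τ h ↦ by
  have hj : (k : ℝ) - j ≠ 0 := sub_ne_zero.2 (by exact_mod_cast j.2.ne')
  refine mul_left_cancel₀ hj ?_
  rw [sub_mul_meanEarlierBelow, sub_mul_meanEarlierBelow,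
    sum_congr rfl fun i hi ↦ by rw [h i (mem_Iio.1 hi)]]

lemma half_sub_le_meanEarlierBelow {π τ : Perm (Fin k)} {j : Fin k} {θ β : ℝ} (hθ : 0 ≤ θ)
    (hj : β * k ≤ k - j) (hX : ∑ i ∈ Iio j, centredRank (π (τ i)) ≤ θ * β * k) :
    j / 2 - θ * k ≤ meanEarlierBelow π j τ := by
  have hpos : (0 : ℝ) < k - j := sub_pos.2 (by exact_mod_cast j.2)
  refine le_of_mul_le_mul_left ?_ hpos
  rw [sub_mul_meanEarlierBelow, mul_sub]
  refine sub_le_sub_left ?_ _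
  calc k * ∑ i ∈ Iio j, centredRank (π (τ i)) ≤ k * (θ * β * k) := by gcongr
    _ = β * k * (θ * k) := by ring
    _ ≤ (k - j) * (θ * k) := by gcongr

lemma card_filter_sub_lt_le (k : ℕ) {x : ℝ} (hx : 0 ≤ x) :
    (#{j : Fin k | (k : ℝ) - j < x} : ℝ) ≤ x := by
  have hsub : #{j : Fin k | (k : ℝ) - j < x} ≤ #{j : Fin k | ¬ (j : ℕ) < k - ⌊x⌋₊} := by
    refine card_le_card (monotone_filter_right _ fun j _ hj hlt ↦ ?_)
    have : x < ((k - j : ℕ) : ℝ) := (Nat.floor_lt hx).1 (by omega)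
    rw [Nat.cast_sub j.2.le] at this
    exact lt_asymm hj this
  have hcount := card_filter_add_card_filter_not (s := univ) fun j : Fin k ↦ (j : ℕ) < k - ⌊x⌋₊
  rw [Fin.card_filter_val_lt, card_univ, Fintype.card_fin] at hcount
  have hfloor : #{j : Fin k | (k : ℝ) - j < x} ≤ ⌊x⌋₊ := hsub.trans (by omega)
  exact (Nat.cast_le.2 hfloor).trans (Nat.floor_le hx)

lemma le_sum_of_half_sub_le {m : Fin k → ℝ} {θ β : ℝ} (hθ : 0 ≤ θ) (hβ : 0 ≤ β)
    (hm₀ : ∀ j, 0 ≤ m j) (hm : ∀ j : Fin k, β * k ≤ k - j → j / 2 - θ * k ≤ m j) :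
    k * ((k : ℝ) - 1) / 4 - (θ + β / 2) * k ^ 2 ≤ ∑ j, m j := by
  have hlate : ∀ j : Fin k, (j / 2 - θ * k : ℝ) - (if (k : ℝ) - j < β * k then (k / 2 : ℝ) else 0) ≤
      m j := by
    intro j
    split_ifs with h
    · have hjk : (j : ℝ) ≤ k := by exact_mod_cast j.2.le
      have hθk : 0 ≤ θ * k := by positivity
      linarith [hm₀ j]
    · simpa using hm j (not_lt.1 h)
  have hcard := card_filter_sub_lt_le k (x := β * k) (by positivity)
  calc k * ((k : ℝ) - 1) / 4 - (θ + β / 2) * k ^ 2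
      = k * ((k : ℝ) - 1) / 2 / 2 - k * (θ * k) - β * k * (k / 2) := by ring
    _ ≤ k * ((k : ℝ) - 1) / 2 / 2 - k * (θ * k) -
          #{j : Fin k | (k : ℝ) - j < β * k} * (k / 2 : ℝ) := by gcongr
    _ = ∑ j : Fin k, ((j / 2 - θ * k : ℝ) - if (k : ℝ) - j < β * k then (k / 2 : ℝ) else 0) := by
        rw [sum_sub_distrib, sum_sub_distrib, ← sum_div, sum_fin_val_eq, ← sum_filter]
        simp
    _ ≤ ∑ j, m j := sum_le_sum fun j _ ↦ hlate j

lemma card_filter_sum_earlierBelow_le {π : Fin k → Perm (Fin k) → Perm (Fin k)}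
    (hπ : ∀ j, PredictableAt j (π j)) {ξ : ℝ} (hξ : 0 ≤ ξ) :
    (#{τ | ∑ j, (earlierBelow (π j τ) j τ (τ j) : ℝ) ≤
        ∑ j, meanEarlierBelow (π j τ) j τ - ξ * k ^ 2} : ℝ) ≤
      Real.exp (-(ξ ^ 2 / 2) * k) * k ! := by
  let Z : Fin k → Perm (Fin k) → Fin k → ℝ := fun j τ t ↦
    (meanEarlierBelow (π j τ) j τ - earlierBelow (π j τ) j τ t) / k
  have hZ : ∀ j, PredictableAt j (Z j) := fun j σ τ h ↦ by
    funext t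
    simp only [Z, hπ j h, meanEarlierBelow_predictableAt _ j h, earlierBelow_predictableAt _ j h]
  have hZ₁ : ∀ j τ t, |Z j τ t| ≤ 1 := fun j τ t ↦ by
    have hY : (earlierBelow (π j τ) j τ t : ℝ) ≤ k := by exact_mod_cast earlierBelow_le ..
    rw [abs_div, Nat.abs_cast]
    exact div_le_one_of_le₀ (abs_sub_le_of_nonneg_of_le (meanEarlierBelow_nonneg ..)
      (meanEarlierBelow_le ..) (Nat.cast_nonneg _) hY) (Nat.cast_nonneg k)
  have hZ₀ : ∀ j τ, ∑ i ∈ Ici j, Z j τ (τ i) ≤ 0 := fun j τ ↦ by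
    simp only [Z, ← sum_div, sum_sub_distrib, sum_const, meanEarlierBelow, card_smul_expect,
      sub_self, zero_div, le_refl]
  have hazuma := card_filter_le_sum_predictable hZ hZ₁ hZ₀ hξ
  rw [Fintype.card_fin] at hazuma
  refine le_trans (Nat.cast_le.2 (card_le_card (monotone_filter_right _ fun τ _ hτ ↦ ?_))) hazuma
  rcases k.eq_zero_or_pos with rfl | hk
  · simp
  · simp only [Z, ← sum_div, sum_sub_distrib]
    rw [le_div_iff₀ (by exact_mod_cast hk)]
    linarith

end EarlierBelow

namespace WDFA

variable {k : ℕ} {V : Type*}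

/-- The state reached from the root after reading the letters of `τ` at positions before `j`. -/
def stateAt (D : WDFA k V) (τ : Perm (Fin k)) (j : Fin k) : V :=
  D.walkEnd D.root ((permWord τ).take j)

lemma stateAt_predictableAt (D : WDFA k V) (j : Fin k) :
    PredictableAt j fun τ ↦ D.stateAt τ j := fun σ τ h ↦ by
  have hprefix : (permWord σ).take j = (permWord τ).take j := by
    refine List.ext_getElem (by simp [permWord]) fun n hn _ ↦ ?_
    simp only [permWord, List.length_take, List.length_map, List.length_finRange, lt_min_iff] at hn
    simpa [permWord] using h ⟨n, hn.2⟩ hn.1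
  simp only [stateAt, hprefix]

lemma Yval_eq_earlierBelow (D : WDFA k V) {π : V → Perm (Fin k)}
    (hπ : ∀ v t, D.cost v t = (((π v t : ℕ) + 1 : ℕ) : ℕ∞)) (τ : Perm (Fin k)) (j : Fin k) :
    Yval D τ j = earlierBelow (π (D.stateAt τ j)) j τ (τ j) := by
  rw [Yval, Nat.card_eq_fintype_card, Fintype.card_subtype, earlierBelow]
  congr 1
  ext i
  rw [mem_filter_univ, mem_filter]
  simp [hπ, stateAt]

lemma card_exists_le_abs_sum_centredRank_le [Fintype V] (π : V → Perm (Fin k)) {η : ℝ}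
    (hη : 0 ≤ η) :
    (#{τ : Perm (Fin k) | ∃ v j, η * k ≤ |∑ i ∈ Iio j, centredRank (π v (τ i))|} : ℝ) ≤
      Fintype.card V * k * (2 * Real.exp (-(η ^ 2 / 2) * k)) * k ! := by
  classical
  let B (q : V × Fin k) : Finset (Perm (Fin k)) :=
    {τ | η * k ≤ |∑ i ∈ Iio q.2, centredRank (π q.1 (τ i))|}
  have hB : ∀ q, (#(B q) : ℝ) ≤ Real.exp (-(η ^ 2 / 2) * k) * (2 * k !) := fun q ↦ by
    simpa only [Fintype.card_fin] using
      card_filter_le_abs_sum_apply (f := fun t ↦ centredRank (π q.1 t))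
        (fun _ ↦ abs_centredRank_le_one _)
        ((Equiv.sum_comp (π q.1) centredRank).trans (sum_centredRank k)) hη (Iio q.2)
  have hunion : ({τ | ∃ v j, η * k ≤ |∑ i ∈ Iio j, centredRank (π v (τ i))|} :
      Finset (Perm (Fin k))) = univ.biUnion B := by
    ext τ; simp [B]
  calc (#{τ : Perm (Fin k) | ∃ v j, η * k ≤ |∑ i ∈ Iio j, centredRank (π v (τ i))|} : ℝ)
      ≤ ∑ q, (#(B q) : ℝ) := by rw [hunion]; exact_mod_cast card_biUnion_le
    _ ≤ ∑ _q : V × Fin k, Real.exp (-(η ^ 2 / 2) * k) * (2 * k !) := sum_le_sum fun q _ ↦ hB q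
    _ = Fintype.card V * k * (2 * Real.exp (-(η ^ 2 / 2) * k)) * k ! := by
        simp only [sum_const, card_univ, Fintype.card_prod, Fintype.card_fin, nsmul_eq_mul,
          Nat.cast_mul]
        ring

theorem card_sum_Yval_lt_le [Fintype V] {D : WDFA k V} (hD : D.IsKDFA) {ε : ℝ} (hε : 0 < ε)
    (hk : 1 ≤ ε * k) :
    (Nat.card {τ : Perm (Fin k) //
        ((∑ j, Yval D τ j : ℕ) : ℝ) < (1 / 4 - ε) * (k : ℝ) ^ 2} : ℝ) ≤
      (Real.exp (-(ε ^ 2 / 32) * k) +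
        Fintype.card V * k * (2 * Real.exp (-(ε ^ 4 / 128) * k))) * k ! := by
  classical
  choose π hπ using hD
  let σ (j : Fin k) (τ : Perm (Fin k)) : Perm (Fin k) := π (D.stateAt τ j)
  have hσ : ∀ j, PredictableAt j (σ j) := fun j _ _ h ↦
    congrArg π (D.stateAt_predictableAt j h)
  let A : Finset (Perm (Fin k)) := {τ | ∑ j, (earlierBelow (σ j τ) j τ (τ j) : ℝ) ≤
    ∑ j, meanEarlierBelow (σ j τ) j τ - ε / 4 * k ^ 2}
  let B : Finset (Perm (Fin k)) :=
    {τ | ∃ v j, ε / 4 * (ε / 2) * k ≤ |∑ i ∈ Iio j, centredRank (π v (τ i))|}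
  have hcover : ({τ | ((∑ j, Yval D τ j : ℕ) : ℝ) < (1 / 4 - ε) * (k : ℝ) ^ 2} :
      Finset (Perm (Fin k))) ⊆ A ∪ B := by
    intro τ hτ
    by_contra hAB
    simp only [A, B, mem_union, mem_filter_univ, not_or, not_le, not_exists] at hτ hAB
    obtain ⟨hA, hB⟩ := hAB
    have hmean := le_sum_of_half_sub_le (m := fun j ↦ meanEarlierBelow (σ j τ) j τ)
      (θ := ε / 4) (β := ε / 2) (by positivity) (by positivity)
      (fun _ ↦ meanEarlierBelow_nonneg ..) fun j hj ↦
        half_sub_le_meanEarlierBelow (by positivity) hj ((le_abs_self _).trans (hB _ j).le)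
    simp only [Nat.cast_sum, D.Yval_eq_earlierBelow hπ] at hτ
    have hkk : (k : ℝ) ≤ ε * k ^ 2 := by nlinarith [Nat.cast_nonneg (α := ℝ) k]
    linarith
  have hAcard : (#A : ℝ) ≤ Real.exp (-((ε / 4) ^ 2 / 2) * k) * k ! :=
    card_filter_sum_earlierBelow_le hσ (by positivity)
  have hBcard := card_exists_le_abs_sum_centredRank_le π (η := ε / 4 * (ε / 2)) (by positivity)
  calc (Nat.card {τ : Perm (Fin k) //
          ((∑ j, Yval D τ j : ℕ) : ℝ) < (1 / 4 - ε) * (k : ℝ) ^ 2} : ℝ)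
      ≤ #A + #B := by
        rw [Nat.card_eq_fintype_card, Fintype.card_subtype]
        exact_mod_cast (card_le_card hcover).trans (card_union_le A B)
    _ ≤ _ := add_le_add hAcard hBcard
    _ = _ := by ring_nf

end WDFA

lemma eventually_sq_le_exp_mul {c : ℝ} (hc : 0 < c) :
    ∀ᶠ k : ℕ in atTop, (k : ℝ) ^ 2 ≤ Real.exp (c * k) := by
  filter_upwards [((isLittleO_pow_exp_pos_mul_atTop 2 hc).comp_tendsto
    tendsto_natCast_atTop_atTop).bound one_pos] with k hk
  simpa using hk

lemma exp_add_mul_exp_lt_exp {a b c x N : ℝ} (hc : 0 < c) (ha : 3 * c ≤ a) (hb : 3 * c ≤ b)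
    (hx : 3 ≤ x) (hx' : x ^ 2 ≤ Real.exp (c * x)) (hN : N ≤ Real.exp (c * x)) :
    Real.exp (-a * x) + N * x * (2 * Real.exp (-b * x)) < Real.exp (-c * x) := by
  set E := Real.exp (-c * x)
  have : 0 < E := Real.exp_pos _
  have hE : E ≤ 1 := Real.exp_le_one_iff.2 (by nlinarith)
  have hinv : Real.exp (c * x) * E = 1 := by rw [← Real.exp_add]; simp
  have hdecay : ∀ d, 3 * c ≤ d → Real.exp (-d * x) ≤ E ^ 3 := fun d hd ↦ by
    rw [← Real.exp_nat_mul]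
    refine Real.exp_le_exp.2 ?_
    push_cast
    nlinarith
  calc Real.exp (-a * x) + N * x * (2 * Real.exp (-b * x))
      ≤ E ^ 3 + Real.exp (c * x) * x * (2 * E ^ 3) := by
        gcongr
        exacts [hdecay a ha, hdecay b hb]
    _ = E ^ 2 * (E + 2 * x * (Real.exp (c * x) * E)) := by ring
    _ < E ^ 2 * Real.exp (c * x) := by
        rw [hinv]
        gcongr
        nlinarith
    _ = E := by linear_combination E * hinv

theorem few_permutations_with_small_Y_sum_general {ε : ℝ} (hε : 0 < ε) :
    ∃ c : ℝ, 0 < c ∧ ∀ᶠ k : ℕ in atTop, ∀ (V : Type*) [Fintype V],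
      (Fintype.card V : ℝ) ≤ Real.exp (c * k) → ∀ D : WDFA k V, D.IsKDFA →
        (Nat.card {τ : Perm (Fin k) //
            ((∑ j : Fin k, Yval D τ j : ℕ) : ℝ) < (1 / 4 - ε) * (k : ℝ) ^ 2} : ℝ) <
          Real.exp (-c * k) * k ! := by
  obtain ⟨c, hc, hc₁, hc₂⟩ : ∃ c, 0 < c ∧ 3 * c ≤ ε ^ 2 / 32 ∧ 3 * c ≤ ε ^ 4 / 128 :=
    ⟨min (ε ^ 2 / 32) (ε ^ 4 / 128) / 3, by positivity,
      by linarith [min_le_left (ε ^ 2 / 32) (ε ^ 4 / 128)],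
      by linarith [min_le_right (ε ^ 2 / 32) (ε ^ 4 / 128)]⟩
  refine ⟨c, hc, ?_⟩
  filter_upwards [eventually_sq_le_exp_mul hc, eventually_ge_atTop 3,
    eventually_ge_atTop ⌈1 / ε⌉₊] with k hsq hk₃ hkε V _ hV D hD
  have hk : 1 ≤ ε * k := by
    rw [← div_le_iff₀' hε]
    exact Nat.ceil_le.1 hkε
  refine (D.card_sum_Yval_lt_le hD hε hk).trans_lt ?_
  gcongr
  exact exp_add_mul_exp_lt_exp hc hc₁ hc₂ (by exact_mod_cast hk₃) hsq hV

/-- For every `ε > 0` there is `c > 0` such that for all sufficiently large `k` and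
every `k`-DFA with at most `k²` states, the number of permutations `τ ∈ S_k` with
`Σ_j Y_j(τ) < (1/4 − ε)k²` is strictly less than `exp(−ck)·k!`. -/
theorem few_permutations_with_small_Y_sum (ε : ℝ) (hε : 0 < ε) :
    ∃ c : ℝ, 0 < c ∧ ∃ K : ℕ, ∀ k : ℕ, K ≤ k →
      ∀ (V : Type) [Fintype V], Fintype.card V ≤ k^2 →
        ∀ D : WDFA k V, D.IsKDFA →
          (Nat.card {τ : Equiv.Perm (Fin k) //
              ((∑ j : Fin k, Yval D τ j : ℕ) : ℝ) < (1/4 - ε) * (k : ℝ)^2} : ℝ) <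
            Real.exp (-c * k) * (Nat.factorial k) := by
  obtain ⟨c, hc, hgeneral⟩ := few_permutations_with_small_Y_sum_general hε
  obtain ⟨K, hK⟩ := eventually_atTop.1 (hgeneral.and (eventually_sq_le_exp_mul hc))
  exact ⟨c, hc, K, fun k hk V _ hV D hD ↦
    (hK k hk).1 V ((by exact_mod_cast hV : (Fintype.card V : ℝ) ≤ k ^ 2).trans (hK k hk).2) D hD⟩
end

section
/- For every ε > 0 and all sufficiently large k: if n ≤ (1/2 − ε)k², then no word σ ∈ [k]^n contains every permutation τ ∈ S_k as a bi-directional circular pattern. In particular, for sufficiently large k there is no σ ∈ [k]^n with n ≤ 3k²/8 + 1/2 containing every τ ∈ S_k as a bi-directional circular pattern, refuting Gupta's conjecture. -/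
/-- A word `σ ∈ [r]^n` contains a permutation `τ ∈ S_k` as a pattern. -/
def ContainsPattern {n r k : ℕ} (σ : Fin n → Fin r) (τ : Equiv.Perm (Fin k)) : Prop :=
  ∃ i : Fin k → Fin n, StrictMono i ∧ ∀ j j' : Fin k, σ (i j) < σ (i j') ↔ τ j < τ j'

/-- The rotation of a word `w ∈ [r]^n` by `s` positions: position `j` reads
`w((j + s) mod n)`. -/
def rotateWord {n r : ℕ} (w : Fin n → Fin r) (s : ℕ) : Fin n → Fin r :=
  fun j => w ⟨((j : ℕ) + s) % n, Nat.mod_lt _ j.pos⟩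

/-- The reversal `w(n), w(n−1), …, w(1)` of a word `w ∈ [r]^n`. -/
def reverseWord {n r : ℕ} (w : Fin n → Fin r) : Fin n → Fin r :=
  fun j => w j.rev

/-- `τ` is a circular pattern of `w` if `τ` is a pattern of some rotation of `w`. -/
def IsCircularPattern {n r k : ℕ} (τ : Equiv.Perm (Fin k)) (w : Fin n → Fin r) : Prop :=
  ∃ s : ℕ, ContainsPattern (rotateWord w s) τ

/-- `τ` is a bi-directional circular pattern (BCP) of `w` if `τ` is a circular pattern
of `w` or of its reversal. -/
def IsBCP {n r k : ℕ} (τ : Equiv.Perm (Fin k)) (w : Fin n → Fin r) : Prop :=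
  IsCircularPattern τ w ∨ IsCircularPattern τ (reverseWord w)

/-! A permutation of `[k]` contained in a word over `[k]` occurs there as a literal subsequence. Cut
the permutation into `b ≈ k / ℓ` blocks of length `ℓ ≈ √k / 2`. Along an occurrence in a rotation of
`σ` or of its reversal, some block lies in a window of at most `n / b ≤ (1/2 - ε/2) k ℓ`
consecutive letters. Embed the subwords of length `ℓ` of such a window at their leftmost positions:
over `[k]` the successive gaps behave at best like independent uniform variables on `{1, …, k}`, of
mean about `k / 2`, so by a Chernoff bound the window has at most `k ^ ℓ * exp (-ε ^ 2 * ℓ / 2)`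
subwords. At least `k ^ ℓ / 2` words of length `ℓ` are injective and each of them is equally likely
to be a given block of a random permutation, so the polynomially many choices of block and window
cannot make up for the exponentially small factor. The argument must be applied to short blocks
rather than to the whole permutation, since `k! / k ^ k` is itself exponentially small. -/

open Finset

theorem sum_le_sum_range_card_of_antitone {M : Type*} [AddCommMonoid M] [PartialOrder M]
    [IsOrderedAddMonoid M] {f : ℕ → M} (hf : Antitone f) (s : Finset ℕ) :
    ∑ i ∈ s, f i ≤ ∑ i ∈ range #s, f i := by
  have hcard : #(s \ range #s) = #(range #s \ s) := card_sdiff_comm (card_range _).symm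
  calc ∑ i ∈ s, f i
      = ∑ i ∈ s ∩ range #s, f i + ∑ i ∈ s \ range #s, f i := (sum_inter_add_sum_sdiff ..).symm
    _ ≤ ∑ i ∈ s ∩ range #s, f i + #(s \ range #s) • f #s := by
      gcongr
      exact sum_le_card_nsmul _ _ _ fun i hi => hf (by simpa using (mem_sdiff.mp hi).2)
    _ ≤ ∑ i ∈ range #s ∩ s, f i + ∑ i ∈ range #s \ s, f i := by
      rw [inter_comm, hcard]
      gcongr
      exact card_nsmul_le_sum _ _ _ fun i hi => hf (mem_range.mp (mem_sdiff.mp hi).1).le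
    _ = ∑ i ∈ range #s, f i := sum_inter_add_sum_sdiff ..

section Subwords

variable {α : Type*} [DecidableEq α]

/-- The distinct words of length `ℓ` that are (not necessarily contiguous) subsequences of `w`. -/
def subwords (w : List α) (ℓ : ℕ) : Finset (List α) :=
  (w.sublistsLen ℓ).toFinset

theorem mem_subwords {w x : List α} {ℓ : ℕ} : x ∈ subwords w ℓ ↔ x.Sublist w ∧ x.length = ℓ := by
  rw [subwords, List.mem_toFinset, List.mem_sublistsLen]

theorem cons_sublist_iff_mem_and_sublist_drop_idxOf {a : α} {x w : List α} :
    (a :: x).Sublist w ↔ a ∈ w ∧ x.Sublist (w.drop (w.idxOf a + 1)) := by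
  induction w with
  | nil => simp
  | cons c w ih =>
    rcases eq_or_ne c a with rfl | hca
    · simp
    · rw [List.cons_sublist_cons', ih]
      simp [List.idxOf_cons_ne _ hca, hca.symm]

theorem card_subwords_succ_le (w : List α) (ℓ : ℕ) :
    #(subwords w (ℓ + 1)) ≤ ∑ a ∈ w.toFinset, #(subwords (w.drop (w.idxOf a + 1)) ℓ) := by
  have hsub : subwords w (ℓ + 1) ⊆ w.toFinset.biUnion fun a =>
      (subwords (w.drop (w.idxOf a + 1)) ℓ).image (List.cons a) := by
    intro x hx
    obtain ⟨hxw, hxl⟩ := mem_subwords.mp hx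
    obtain ⟨a, y, rfl⟩ := List.exists_cons_of_length_eq_add_one hxl
    obtain ⟨ha, hy⟩ := cons_sublist_iff_mem_and_sublist_drop_idxOf.mp hxw
    rw [mem_biUnion]
    exact ⟨a, List.mem_toFinset.mpr ha,
      mem_image_of_mem _ (mem_subwords.mpr ⟨hy, Nat.succ.inj hxl⟩)⟩
  exact (card_le_card hsub).trans
    (card_biUnion_le.trans (sum_le_sum fun _ _ => card_image_le))

variable [Fintype α]

theorem sum_pow_idxOf_le {q : ℝ} (hq₀ : 0 ≤ q) (hq₁ : q ≤ 1) (w : List α) :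
    ∑ a ∈ w.toFinset, q ^ (w.idxOf a + 1) ≤ ∑ d ∈ range (Fintype.card α), q ^ (d + 1) := by
  have hanti : Antitone fun d : ℕ => q ^ (d + 1) := fun _ _ h =>
    pow_le_pow_of_le_one hq₀ hq₁ (Nat.succ_le_succ h)
  have hinj : Set.InjOn (fun a => w.idxOf a) w.toFinset := fun a ha _ _ h =>
    (List.idxOf_inj (List.mem_toFinset.mp ha)).mp h
  calc ∑ a ∈ w.toFinset, q ^ (w.idxOf a + 1)
      = ∑ d ∈ w.toFinset.image (fun a => w.idxOf a), q ^ (d + 1) :=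
      (sum_image (f := fun d => q ^ (d + 1)) hinj).symm
    _ ≤ ∑ d ∈ range #(w.toFinset.image fun a => w.idxOf a), q ^ (d + 1) :=
      sum_le_sum_range_card_of_antitone hanti _
    _ ≤ ∑ d ∈ range (Fintype.card α), q ^ (d + 1) :=
      sum_le_sum_of_subset_of_nonneg
        (range_subset_range.mpr (card_image_le.trans (card_le_univ _)))
        fun _ _ _ => pow_nonneg hq₀ _

theorem card_subwords_mul_pow_le {q : ℝ} (hq₀ : 0 ≤ q) (hq₁ : q ≤ 1) (w : List α) (ℓ : ℕ) :
    #(subwords w ℓ) * q ^ w.length ≤ (∑ d ∈ range (Fintype.card α), q ^ (d + 1)) ^ ℓ := by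
  set T := ∑ d ∈ range (Fintype.card α), q ^ (d + 1)
  induction ℓ generalizing w with
  | zero => simpa [subwords] using pow_le_one₀ hq₀ hq₁
  | succ ℓ ih =>
    have hlen : ∀ a ∈ w.toFinset,
        w.length = (w.drop (w.idxOf a + 1)).length + (w.idxOf a + 1) := fun a ha => by
      have := List.idxOf_lt_length_of_mem (List.mem_toFinset.mp ha)
      rw [List.length_drop]
      lia
    calc #(subwords w (ℓ + 1)) * q ^ w.length
        ≤ (∑ a ∈ w.toFinset, (#(subwords (w.drop (w.idxOf a + 1)) ℓ) : ℝ)) * q ^ w.length := by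
          gcongr
          exact_mod_cast card_subwords_succ_le w ℓ
      _ = ∑ a ∈ w.toFinset, #(subwords (w.drop (w.idxOf a + 1)) ℓ) *
            q ^ (w.drop (w.idxOf a + 1)).length * q ^ (w.idxOf a + 1) := by
          rw [sum_mul]
          refine sum_congr rfl fun a ha => ?_
          rw [mul_assoc, ← pow_add, ← hlen a ha]
      _ ≤ ∑ a ∈ w.toFinset, T ^ ℓ * q ^ (w.idxOf a + 1) := by
          gcongr
          exact ih _
      _ = T ^ ℓ * ∑ a ∈ w.toFinset, q ^ (w.idxOf a + 1) := (mul_sum ..).symm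
      _ ≤ T ^ ℓ * T := by
          gcongr
          exact sum_pow_idxOf_le hq₀ hq₁ w
      _ = T ^ (ℓ + 1) := (pow_succ T ℓ).symm

end Subwords

section Chernoff

theorem exp_add_exp_le (a b : ℝ) :
    Real.exp a + Real.exp b ≤ 2 * Real.exp ((a + b) / 2 + (a - b) ^ 2 / 8) := by
  calc Real.exp a + Real.exp b
      = 2 * (Real.exp ((a + b) / 2) * Real.cosh ((a - b) / 2)) := by
        rw [Real.cosh_eq, mul_div_assoc', mul_div_cancel₀ _ two_ne_zero, mul_add, ← Real.exp_add,
          ← Real.exp_add]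
        ring_nf
    _ ≤ 2 * (Real.exp ((a + b) / 2) * Real.exp (((a - b) / 2) ^ 2 / 2)) := by
        gcongr
        exact Real.cosh_le_exp_half_sq _
    _ = 2 * Real.exp ((a + b) / 2 + (a - b) ^ 2 / 8) := by
        rw [← Real.exp_add]
        ring_nf

theorem sum_range_exp_neg_le (k : ℕ) {s : ℝ} (hs : 0 ≤ s) :
    ∑ d ∈ range k, Real.exp (-(s / k)) ^ (d + 1) ≤ k * Real.exp (-s / 2 + s ^ 2 / 8) := by
  rcases k.eq_zero_or_pos with rfl | hk
  · simp
  have hk₀ : (0 : ℝ) < k := Nat.cast_pos.mpr hk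
  have hpair : ∀ d ∈ range k,
      Real.exp (-(s / k)) ^ (d + 1) + Real.exp (-(s / k)) ^ (k - 1 - d + 1) ≤
        2 * Real.exp (-s / 2 + s ^ 2 / 8) := by
    intro d hd
    have hdk : (d : ℝ) + 1 ≤ k := by exact_mod_cast mem_range.mp hd
    have hcast : ((k - 1 - d + 1 : ℕ) : ℝ) = k - d := by
      rw [Nat.sub_right_comm, Nat.sub_add_cancel (Nat.sub_pos_of_lt (mem_range.mp hd)),
        Nat.cast_sub (mem_range.mp hd).le]
    rw [← Real.exp_nat_mul, ← Real.exp_nat_mul, hcast, Nat.cast_succ]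
    refine (exp_add_exp_le _ _).trans ?_
    have hsk : 0 ≤ s / k := div_nonneg hs hk₀.le
    have hbound : ∀ t : ℝ, 0 ≤ t → t ≤ k → -s ≤ t * -(s / k) ∧ t * -(s / k) ≤ 0 := by
      intro t ht₀ htk
      have := mul_le_mul_of_nonneg_right htk hsk
      rw [mul_div_cancel₀ s hk₀.ne'] at this
      exact ⟨by linarith, by linarith [mul_nonneg ht₀ hsk]⟩
    have ha := hbound (d + 1) (by positivity) hdk
    have hb := hbound (k - d) (by linarith) (by linarith [d.cast_nonneg (α := ℝ)])
    have hmean : (d + 1) * -(s / k) + (k - d) * -(s / k) ≤ -s := by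
      linarith [mul_div_cancel₀ s hk₀.ne']
    gcongr 2 * Real.exp (?_ / 2 + ?_ / 8)
    exact sq_le_sq' (by linarith) (by linarith)
  have hsum := sum_le_sum hpair
  rw [sum_add_distrib, sum_range_reflect (fun d => Real.exp (-(s / k)) ^ (d + 1)), sum_const,
    card_range, nsmul_eq_mul] at hsum
  linarith

theorem card_subwords_le {α : Type*} [DecidableEq α] [Fintype α] [Nonempty α] {w : List α} {ℓ : ℕ}
    {δ : ℝ} (hδ : 0 ≤ δ) (hw : w.length ≤ (1 / 2 - δ) * Fintype.card α * ℓ) :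
    #(subwords w ℓ) ≤ (Fintype.card α : ℝ) ^ ℓ * Real.exp (-2 * δ ^ 2) ^ ℓ := by
  have hk : (0 : ℝ) < Fintype.card α := Nat.cast_pos.mpr Fintype.card_pos
  set k := Fintype.card α
  -- The exponent `ℓ * (-s / 2 + s ^ 2 / 8) + w.length * s / k` is smallest at `s = 4 * δ`.
  set q := Real.exp (-(4 * δ / k))
  have hq₁ : q ≤ 1 := Real.exp_le_one_iff.mpr (neg_nonpos.mpr (by positivity))
  have hqw : Real.exp (-(4 * δ * (1 / 2 - δ))) ^ ℓ ≤ q ^ w.length := by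
    rw [← Real.exp_nat_mul, ← Real.exp_nat_mul, Real.exp_le_exp]
    calc ℓ * -(4 * δ * (1 / 2 - δ)) = (1 / 2 - δ) * k * ℓ * -(4 * δ / k) := by field_simp
      _ ≤ w.length * -(4 * δ / k) :=
        mul_le_mul_of_nonpos_right hw (neg_nonpos.mpr (by positivity))
  refine le_of_mul_le_mul_right ?_ (pow_pos (Real.exp_pos (-(4 * δ * (1 / 2 - δ)))) ℓ)
  calc #(subwords w ℓ) * Real.exp (-(4 * δ * (1 / 2 - δ))) ^ ℓ
      ≤ #(subwords w ℓ) * q ^ w.length := by gcongr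
    _ ≤ (∑ d ∈ range k, q ^ (d + 1)) ^ ℓ :=
      card_subwords_mul_pow_le (Real.exp_pos _).le hq₁ w ℓ
    _ ≤ (k * Real.exp (-(4 * δ) / 2 + (4 * δ) ^ 2 / 8)) ^ ℓ := by
      gcongr
      exact sum_range_exp_neg_le k (by positivity)
    _ = (k : ℝ) ^ ℓ * Real.exp (-2 * δ ^ 2) ^ ℓ * Real.exp (-(4 * δ * (1 / 2 - δ))) ^ ℓ := by
      rw [← mul_pow, ← mul_pow, mul_assoc, ← Real.exp_add]
      ring_nf

end Chernoff

section Action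

variable {G X : Type*} [Group G] [MulAction G X] [MulAction.IsPretransitive G X] [Fintype X]

theorem card_filter_smul_eq_mul_card [Fintype G] [DecidableEq X] (x y : X) :
    #{g : G | g • x = y} * Fintype.card X = Fintype.card G := by
  have hfiber : ∀ z ∈ (univ : Finset X), #{g : G | g • x = z} = #{g : G | g • x = y} := by
    intro z _
    obtain ⟨h, rfl⟩ := MulAction.exists_smul_eq G z y
    exact card_equiv (Equiv.mulLeft h) fun g => by simp [mul_smul]
  calc #{g : G | g • x = y} * Fintype.card X
      = ∑ z : X, #{g : G | g • x = z} := by rw [sum_const_nat hfiber, card_univ, mul_comm]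
    _ = Fintype.card G :=
      (card_eq_sum_card_fiberwise (s := univ) fun _ _ => mem_coe.mpr (mem_univ _)).symm

theorem card_filter_smul_mem_mul_card [Fintype G] [DecidableEq X] (x : X) (B : Finset X) :
    #{g : G | g • x ∈ B} * Fintype.card X = #B * Fintype.card G := by
  have hB : #{g : G | g • x ∈ B} = ∑ y ∈ B, #{g : G | g • x = y} := by
    rw [card_eq_sum_card_fiberwise (f := fun g : G => g • x) (t := B) (by intro; simp)]
    refine sum_congr rfl fun y hy => congrArg card ?_
    grind
  rw [hB, sum_mul, sum_const_nat fun y _ => card_filter_smul_eq_mul_card x y]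

variable (G) in
theorem card_le_mul_of_forall_exists_smul_mem [Finite G] {ι : Type*} [Fintype ι] (x : ι → X)
    (B : Finset X) (h : ∀ g : G, ∃ i, g • x i ∈ B) : Fintype.card X ≤ Fintype.card ι * #B := by
  classical
  have := Fintype.ofFinite G
  have hcover : (univ : Finset G) ⊆ univ.biUnion fun i => {g : G | g • x i ∈ B} := fun g _ => by
    simpa using h g
  refine Nat.le_of_mul_le_mul_right ?_ (Fintype.card_pos (α := G))
  calc Fintype.card X * Fintype.card G
      ≤ Fintype.card X * ∑ i, #{g : G | g • x i ∈ B} := by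
        gcongr
        exact (card_le_card hcover).trans card_biUnion_le
    _ = ∑ _i : ι, #B * Fintype.card G := by
        simp_rw [mul_comm (Fintype.card X), sum_mul, card_filter_smul_mem_mul_card]
    _ = Fintype.card ι * #B * Fintype.card G := by
        rw [sum_const, card_univ, smul_eq_mul, mul_assoc]

end Action

section CircularWords

variable {α : Type*}

theorem exists_infix_of_flatten_sublist {blocks : List (List α)} {w : List α} {L : ℕ}
    (h : blocks.flatten.Sublist w) (hL : w.length < blocks.length * (L + 1)) :
    ∃ x ∈ blocks, ∃ v, v <:+: w ∧ v.length ≤ L ∧ x.Sublist v := by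
  induction blocks generalizing w with
  | nil => simp at hL
  | cons x blocks ih =>
    obtain ⟨v, w', rfl, hxv, hw'⟩ := List.append_sublist_iff.mp h
    rcases le_or_gt v.length L with hv | hv
    · exact ⟨x, List.mem_cons_self, v, (List.prefix_append v w').isInfix, hv, hxv⟩
    · rw [List.length_append, List.length_cons, Nat.add_one_mul] at hL
      obtain ⟨y, hy, u, huw, hu⟩ := ih hw' (by lia)
      exact ⟨y, List.mem_cons_of_mem x hy, u, huw.trans (List.suffix_append v w').isInfix, hu⟩

theorem exists_isRotated_prefix_of_infix {v w : List α} (h : v <:+: w) :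
    ∃ w', w'.IsRotated w ∧ v <+: w' := by
  obtain ⟨s, t, rfl⟩ := h
  exact ⟨v ++ (t ++ s), by simpa using List.isRotated_append (l := v ++ t) (l' := s),
    List.prefix_append ..⟩

variable [DecidableEq α]

/-- The words of length `ℓ` that are subsequences of some window of `L` cyclically consecutive
letters of `w`. Windows are encoded as prefixes of rotations of `w`. -/
def windowSubwords (w : List α) (L ℓ : ℕ) : Finset (List α) :=
  w.cyclicPermutations.toFinset.biUnion fun v => subwords (v.take L) ℓ

theorem mem_windowSubwords {w x : List α} {L ℓ : ℕ} :
    x ∈ windowSubwords w L ℓ ↔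
      ∃ v : List α, v.IsRotated w ∧ x.Sublist (v.take L) ∧ x.length = ℓ := by
  simp only [windowSubwords, mem_biUnion, List.mem_toFinset, List.mem_cyclicPermutations_iff,
    mem_subwords]

theorem exists_mem_windowSubwords_of_flatten_sublist {blocks : List (List α)} {v w : List α}
    {L ℓ : ℕ} (hvw : v.IsRotated w) (h : blocks.flatten.Sublist v)
    (hℓ : ∀ x ∈ blocks, x.length = ℓ) (hL : w.length < blocks.length * (L + 1)) :
    ∃ x ∈ blocks, x ∈ windowSubwords w L ℓ := by
  rw [← hvw.perm.length_eq] at hL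
  obtain ⟨x, hx, u, huv, huL, hxu⟩ := exists_infix_of_flatten_sublist h hL
  obtain ⟨v', hv', huv'⟩ := exists_isRotated_prefix_of_infix huv
  have huv'L : u <+: v'.take L := List.prefix_take_iff.mpr ⟨huv', huL⟩
  exact ⟨x, hx, mem_windowSubwords.mpr
    ⟨v', hv'.trans hvw, hxu.trans huv'L.sublist, hℓ x hx⟩⟩

theorem card_windowSubwords_le {w : List α} {L ℓ : ℕ} {N : ℝ} (hℓ : ℓ ≠ 0)
    (hN : ∀ v : List α, v.length ≤ L → #(subwords v ℓ) ≤ N) :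
    #(windowSubwords w L ℓ) ≤ w.length * N := by
  rcases eq_or_ne w [] with rfl | hw
  · have hempty : subwords ([] : List α) ℓ = ∅ := by
      obtain ⟨m, rfl⟩ := Nat.exists_eq_succ_of_ne_zero hℓ
      rfl
    simp [windowSubwords, hempty]
  · have hrot : #w.cyclicPermutations.toFinset ≤ w.length :=
      (List.toFinset_card_le _).trans (List.length_cyclicPermutations_of_ne_nil w hw).le
    have hN₀ : 0 ≤ N := (Nat.cast_nonneg _).trans (hN [] (Nat.zero_le L))
    calc (#(windowSubwords w L ℓ) : ℝ)
        ≤ ∑ v ∈ w.cyclicPermutations.toFinset, (#(subwords (v.take L) ℓ) : ℝ) := by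
          exact_mod_cast card_biUnion_le
      _ ≤ #w.cyclicPermutations.toFinset * N := by
          rw [← nsmul_eq_mul]
          exact sum_le_card_nsmul _ _ _ fun v _ => hN _ (List.length_take_le L v)
      _ ≤ w.length * N := by gcongr

end CircularWords

section Patterns

theorem ofFn_comp_sublist_ofFn {α : Type*} {m n : ℕ} (f : Fin n → α) {i : Fin m → Fin n}
    (hi : StrictMono i) : (List.ofFn (f ∘ i)).Sublist (List.ofFn f) := by
  refine List.sublist_iff_exists_fin_orderEmbedding_get_eq.mpr
    ⟨((Fin.castOrderIso List.length_ofFn).toOrderEmbedding.trans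
      (OrderEmbedding.ofStrictMono i hi)).trans
      (Fin.castOrderIso List.length_ofFn.symm).toOrderEmbedding, fun j => ?_⟩
  simp
  rfl

theorem ofFn_rotateWord {n r : ℕ} (w : Fin n → Fin r) (s : ℕ) :
    List.ofFn (rotateWord w s) = (List.ofFn w).rotate s :=
  List.ext_getElem (by simp) fun _ _ _ => by simp [rotateWord, List.getElem_rotate]

theorem eq_of_forall_lt_iff_lt {ι α : Type*} [LinearOrder α] [Finite α] {f g : ι → α}
    (hg : Function.Bijective g) (h : ∀ i j, f i < f j ↔ g i < g j) : f = g := by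
  obtain ⟨g, rfl⟩ : ∃ e : ι ≃ α, e = g := ⟨Equiv.ofBijective g hg, rfl⟩
  have hmono : StrictMono (f ∘ g.symm) := fun a b hab => by simpa [h] using hab
  exact (g.comp_symm_eq id f).mp (funext fun _ => le_antisymm hmono.apply_le hmono.le_apply)

theorem ContainsPattern.ofFn_sublist {n k : ℕ} {σ : Fin n → Fin k} {τ : Equiv.Perm (Fin k)}
    (h : ContainsPattern σ τ) : (List.ofFn τ).Sublist (List.ofFn σ) := by
  obtain ⟨i, hi, hστ⟩ := h
  have heq : σ ∘ i = τ := eq_of_forall_lt_iff_lt τ.bijective hστ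
  rw [← heq]
  exact ofFn_comp_sublist_ofFn σ hi

theorem IsCircularPattern.exists_isRotated_sublist {n k : ℕ} {w : Fin n → Fin k}
    {τ : Equiv.Perm (Fin k)} (h : IsCircularPattern τ w) :
    ∃ v : List (Fin k), v.IsRotated (List.ofFn w) ∧ (List.ofFn τ).Sublist v := by
  obtain ⟨s, hs⟩ := h
  have hsub := hs.ofFn_sublist
  rw [ofFn_rotateWord] at hsub
  exact ⟨_, List.IsRotated.symm ⟨s, rfl⟩, hsub⟩

end Patterns

section Blocks

variable {k ℓ b : ℕ}

/-- The embedding of the `t`-th block `{tℓ, …, tℓ + ℓ - 1}` of `ℓ` consecutive positions into the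
set of all `k` positions. -/
def blockEmb (h : b * ℓ ≤ k) (t : Fin b) : Fin ℓ ↪ Fin k where
  toFun j := (finProdFinEquiv (t, j)).castLE h
  inj' _ _ hj := (Prod.mk.inj (finProdFinEquiv.injective (Fin.castLE_injective h hj))).2

theorem flatten_ofFn_blockEmb_sublist {α : Type*} (h : b * ℓ ≤ k) (f : Fin k → α) :
    (List.ofFn fun t => List.ofFn (f ∘ blockEmb h t)).flatten.Sublist (List.ofFn f) := by
  have hflat : (List.ofFn fun t => List.ofFn (f ∘ blockEmb h t)).flatten =
      List.ofFn (f ∘ Fin.castLE h) := by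
    rw [List.ofFn_mul]
    simp [blockEmb, Function.comp_def, finProdFinEquiv, Nat.mul_comm ℓ, Nat.add_comm]
  rw [hflat]
  exact ofFn_comp_sublist_ofFn f (Fin.strictMono_castLE h)

theorem IsCircularPattern.exists_block_mem_windowSubwords {n : ℕ} {w : Fin n → Fin k}
    {τ : Equiv.Perm (Fin k)} (hτ : IsCircularPattern τ w) (hb : b ≠ 0) (h : b * ℓ ≤ k) :
    ∃ t, List.ofFn (τ ∘ blockEmb h t) ∈ windowSubwords (List.ofFn w) (n / b) ℓ := by
  obtain ⟨v, hv, hτv⟩ := hτ.exists_isRotated_sublist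
  obtain ⟨x, hx, hxw⟩ := exists_mem_windowSubwords_of_flatten_sublist (L := n / b) (ℓ := ℓ) hv
    ((flatten_ofFn_blockEmb_sublist h τ).trans hτv) (by simp [List.mem_ofFn])
    (by simpa using Nat.lt_mul_div_succ n (Nat.pos_of_ne_zero hb))
  obtain ⟨t, rfl⟩ := List.mem_ofFn.mp hx
  exact ⟨t, hxw⟩

theorem descFactorial_le_of_forall_isBCP {n : ℕ} {σ : Fin n → Fin k}
    (hσ : ∀ τ : Equiv.Perm (Fin k), IsBCP τ σ) (hb : b ≠ 0) (hℓ : ℓ ≠ 0) (h : b * ℓ ≤ k) {N : ℝ}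
    (hN : ∀ v : List (Fin k), v.length ≤ n / b → #(subwords v ℓ) ≤ N) :
    k.descFactorial ℓ ≤ b * (2 * n * N) := by
  have := Equiv.Perm.isMultiplyPretransitive (Fin k) ℓ
  set W := windowSubwords (List.ofFn σ) (n / b) ℓ ∪
    windowSubwords (List.ofFn (reverseWord σ)) (n / b) ℓ with hW
  set B : Finset (Fin ℓ ↪ Fin k) := {f | List.ofFn f ∈ W}
  have hBW : #B ≤ #W := card_le_card_of_injOn (fun f => List.ofFn f)
    (fun f hf => (mem_filter.mp hf).2)
    fun f _ g _ hfg => DFunLike.coe_injective (List.ofFn_injective hfg)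
  have hWN : (#W : ℝ) ≤ 2 * n * N := by
    have h₁ := card_windowSubwords_le (w := List.ofFn σ) hℓ hN
    have h₂ := card_windowSubwords_le (w := List.ofFn (reverseWord σ)) hℓ hN
    rw [List.length_ofFn] at h₁ h₂
    have h₃ : (#W : ℝ) ≤ #(windowSubwords (List.ofFn σ) (n / b) ℓ) +
        #(windowSubwords (List.ofFn (reverseWord σ)) (n / b) ℓ) := by
      exact_mod_cast card_union_le _ _
    linarith
  have hcover : ∀ τ : Equiv.Perm (Fin k), ∃ t, τ • blockEmb h t ∈ B := fun τ => by
    simp only [B, mem_filter, mem_univ, true_and, hW, mem_union]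
    rcases hσ τ with hτ | hτ <;>
      obtain ⟨t, ht⟩ := hτ.exists_block_mem_windowSubwords hb h
    · exact ⟨t, .inl ht⟩
    · exact ⟨t, .inr ht⟩
  have hcard : k.descFactorial ℓ ≤ b * #B := by
    simpa [Fintype.card_embedding_eq] using
      card_le_mul_of_forall_exists_smul_mem (Equiv.Perm (Fin k)) (blockEmb h) B hcover
  calc (k.descFactorial ℓ : ℝ) ≤ b * #B := by exact_mod_cast hcard
    _ ≤ b * #W := by gcongr
    _ ≤ b * (2 * n * N) := by gcongr

end Blocks

section Asymptotics

open Filter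

theorem pow_le_two_mul_descFactorial {k ℓ : ℕ} (h : 2 * ℓ ^ 2 ≤ k) :
    (k : ℝ) ^ ℓ ≤ 2 * k.descFactorial ℓ := by
  rcases k.eq_zero_or_pos with rfl | hk
  · obtain rfl : ℓ = 0 := by nlinarith
    simp
  have hk₀ : (0 : ℝ) < k := Nat.cast_pos.mpr hk
  have hℓk : (ℓ : ℝ) ≤ k := by exact_mod_cast (show ℓ ≤ k by nlinarith)
  have hratio : (ℓ : ℝ) * (ℓ / k) ≤ 1 / 2 := by
    rw [mul_div_assoc', div_le_iff₀ hk₀]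
    have : (2 : ℝ) * ℓ ^ 2 ≤ k := by exact_mod_cast h
    linarith
  have hbernoulli : (1 : ℝ) / 2 ≤ (1 + -(ℓ / k)) ^ ℓ := by
    have := one_add_mul_le_pow (a := -(ℓ / k : ℝ))
      (by linarith [(div_le_one hk₀).mpr hℓk]) ℓ
    linarith
  calc (k : ℝ) ^ ℓ = 2 * (k ^ ℓ * (1 / 2)) := by ring
    _ ≤ 2 * (k ^ ℓ * (1 + -(ℓ / k)) ^ ℓ) := by gcongr
    _ = 2 * (k - ℓ) ^ ℓ := by
      rw [← mul_pow]
      field_simp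
      ring
    _ ≤ 2 * ((k + 1 - ℓ : ℕ) : ℝ) ^ ℓ := by
      gcongr
      rw [sub_le_iff_le_add]
      exact_mod_cast (show k ≤ k + 1 - ℓ + ℓ by lia)
    _ ≤ 2 * k.descFactorial ℓ := by
      gcongr
      exact_mod_cast Nat.pow_sub_le_descFactorial k ℓ

theorem natCast_div_div_le {k n ℓ : ℕ} {ε : ℝ} (hε : ε ≤ 1) (hn : n ≤ (1 / 2 - ε) * (k : ℝ) ^ 2)
    (hℓ : 0 < ℓ) (hℓε : ℓ ≤ ε * k) : (n / (k / ℓ) : ℕ) ≤ (1 / 2 - ε / 2) * k * ℓ := by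
  have hk₀ : (0 : ℝ) ≤ k := k.cast_nonneg
  have hℓk : ℓ ≤ k := by exact_mod_cast (show (ℓ : ℝ) ≤ k by nlinarith)
  have hb : (0 : ℝ) < (k / ℓ : ℕ) := Nat.cast_pos.mpr (Nat.div_pos hℓk hℓ)
  have hkb : (k : ℝ) - ℓ ≤ (k / ℓ : ℕ) * ℓ := by
    have : (k : ℝ) < (k / ℓ : ℕ) * ℓ + ℓ := by exact_mod_cast Nat.lt_div_mul_add hℓ
    linarith
  have hε₀ : 0 ≤ ε :=
    (pos_of_mul_pos_left ((Nat.cast_pos.mpr hℓ).trans_le hℓε) hk₀).le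
  have hslack : (1 / 2 - ε) * k ≤ (1 / 2 - ε / 2) * (k - ℓ) := by
    linarith [mul_nonneg hε₀ (ℓ.cast_nonneg (α := ℝ))]
  refine Nat.cast_div_le.trans ((div_le_iff₀ hb).mpr ?_)
  calc (n : ℝ) ≤ (1 / 2 - ε) * k * k := by rwa [mul_assoc, ← sq]
    _ ≤ (1 / 2 - ε / 2) * ((k / ℓ : ℕ) * ℓ) * k := by
      refine mul_le_mul_of_nonneg_right (hslack.trans ?_) hk₀
      exact mul_le_mul_of_nonneg_left hkb (by linarith)
    _ = (1 / 2 - ε / 2) * k * ℓ * (k / ℓ : ℕ) := by ring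

theorem one_le_of_forall_isBCP {k n ℓ : ℕ} {ε : ℝ} {σ : Fin n → Fin k}
    (hσ : ∀ τ : Equiv.Perm (Fin k), IsBCP τ σ) (hn : n ≤ (1 / 2 - ε) * (k : ℝ) ^ 2)
    (hℓ : 0 < ℓ) (hℓk : 2 * ℓ ^ 2 ≤ k) (hℓε : ℓ ≤ ε * k) :
    1 ≤ 2 * (k : ℝ) ^ 3 * Real.exp (-2 * (ε / 2) ^ 2) ^ ℓ := by
  have hk : 0 < k := (by positivity : 0 < 2 * ℓ ^ 2).trans_le hℓk
  have hk₀ : (0 : ℝ) < k := Nat.cast_pos.mpr hk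
  have : Nonempty (Fin k) := ⟨⟨0, hk⟩⟩
  have hε₀ : 0 < ε := pos_of_mul_pos_left ((Nat.cast_pos.mpr hℓ).trans_le hℓε) hk₀.le
  have hε₁ : ε ≤ 1 / 2 :=
    sub_nonneg.mp (nonneg_of_mul_nonneg_left (n.cast_nonneg.trans hn) (pow_pos hk₀ 2))
  have hnk : 2 * (n : ℝ) ≤ k ^ 2 := by nlinarith [mul_pos hε₀ (pow_pos hk₀ 2)]
  have hbk : ((k / ℓ : ℕ) : ℝ) ≤ k := by exact_mod_cast Nat.div_le_self k ℓ
  set r := Real.exp (-2 * (ε / 2) ^ 2)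
  have hwindow : ∀ v : List (Fin k), v.length ≤ n / (k / ℓ) →
      (#(subwords v ℓ) : ℝ) ≤ (k : ℝ) ^ ℓ * r ^ ℓ := fun v hv => by
    have hvℓ : (v.length : ℝ) ≤ (1 / 2 - ε / 2) * Fintype.card (Fin k) * ℓ := by
      rw [Fintype.card_fin]
      exact (Nat.cast_le.mpr hv).trans (natCast_div_div_le (by linarith) hn hℓ hℓε)
    simpa only [Fintype.card_fin] using card_subwords_le (half_pos hε₀).le hvℓ
  have hcount := descFactorial_le_of_forall_isBCP hσ
    (Nat.div_pos (by nlinarith) hℓ).ne' hℓ.ne' (Nat.div_mul_le_self k ℓ) hwindow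
  refine le_of_mul_le_mul_left ?_ (pow_pos hk₀ ℓ)
  calc (k : ℝ) ^ ℓ * 1 ≤ 2 * k.descFactorial ℓ := by
        simpa only [mul_one] using pow_le_two_mul_descFactorial hℓk
    _ ≤ 2 * ((k / ℓ : ℕ) * (2 * n * (k ^ ℓ * r ^ ℓ))) := by gcongr
    _ ≤ 2 * (k * (k ^ 2 * (k ^ ℓ * r ^ ℓ))) := by gcongr
    _ = k ^ ℓ * (2 * k ^ 3 * r ^ ℓ) := by ring

theorem four_mul_sqrt_div_two_sq_le (k : ℕ) : 4 * (k.sqrt / 2) ^ 2 ≤ k :=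
  calc 4 * (k.sqrt / 2) ^ 2 = (k.sqrt / 2 * 2) ^ 2 := by ring
    _ ≤ k.sqrt ^ 2 := by
      gcongr
      exact Nat.div_mul_le_self _ _
    _ ≤ k := Nat.sqrt_le' k

theorem le_sixteen_mul_sqrt_div_two_sq {k : ℕ} (h : 0 < k.sqrt / 2) :
    k ≤ 16 * (k.sqrt / 2) ^ 2 :=
  calc k ≤ (k.sqrt + 1) ^ 2 := (Nat.lt_succ_sqrt' k).le
    _ ≤ (4 * (k.sqrt / 2)) ^ 2 := by
      gcongr
      lia
    _ = 16 * (k.sqrt / 2) ^ 2 := by ring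

theorem tendsto_sqrt_div_two_atTop : Tendsto (fun k : ℕ => k.sqrt / 2) atTop atTop :=
  (Nat.tendsto_div_const_atTop two_ne_zero).comp <|
    tendsto_atTop_atTop.mpr fun m => ⟨m ^ 2, fun _ h => Nat.le_sqrt'.mpr h⟩

theorem eventually_sqrt_div_two_le {ε : ℝ} (hε : 0 < ε) :
    ∀ᶠ k : ℕ in atTop, ((k.sqrt / 2 : ℕ) : ℝ) ≤ ε * k := by
  filter_upwards [tendsto_sqrt_div_two_atTop.eventually
    (tendsto_natCast_atTop_atTop.eventually_ge_atTop ε⁻¹)] with k hk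
  set ℓ := k.sqrt / 2
  have hℓk : (4 : ℝ) * ℓ ^ 2 ≤ k := by exact_mod_cast four_mul_sqrt_div_two_sq_le k
  calc (ℓ : ℝ) = ε * ε⁻¹ * ℓ := by rw [mul_inv_cancel₀ hε.ne', one_mul]
    _ ≤ ε * ℓ * ℓ := by gcongr
    _ = ε * ℓ ^ 2 := by ring
    _ ≤ ε * k := by
      gcongr
      linarith [sq_nonneg (ℓ : ℝ)]

theorem eventually_cube_mul_pow_sqrt_div_two_lt_one {r : ℝ} (hr₀ : 0 ≤ r) (hr₁ : r < 1) :
    ∀ᶠ k : ℕ in atTop, 2 * (k : ℝ) ^ 3 * r ^ (k.sqrt / 2) < 1 := by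
  have hlim : Tendsto (fun ℓ : ℕ => 2 * 16 ^ 3 * ((ℓ : ℝ) ^ 6 * r ^ ℓ)) atTop (nhds 0) := by
    simpa only [mul_zero] using (tendsto_pow_const_mul_const_pow_of_abs_lt_one 6
      ((abs_of_nonneg hr₀).trans_lt hr₁)).const_mul (2 * 16 ^ 3 : ℝ)
  filter_upwards [tendsto_sqrt_div_two_atTop.eventually (hlim.eventually_lt_const one_pos),
    tendsto_sqrt_div_two_atTop.eventually_gt_atTop 0] with k hk hℓ
  have hkℓ : (k : ℝ) ≤ 16 * (k.sqrt / 2 : ℕ) ^ 2 := by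
    exact_mod_cast le_sixteen_mul_sqrt_div_two_sq hℓ
  calc 2 * (k : ℝ) ^ 3 * r ^ (k.sqrt / 2)
      ≤ 2 * (16 * (k.sqrt / 2 : ℕ) ^ 2) ^ 3 * r ^ (k.sqrt / 2) := by gcongr
    _ = 2 * 16 ^ 3 * ((k.sqrt / 2 : ℕ) ^ 6 * r ^ (k.sqrt / 2)) := by ring
    _ < 1 := hk

theorem eventually_forall_not_forall_isBCP {ε : ℝ} (hε : 0 < ε) :
    ∀ᶠ k : ℕ in atTop, ∀ n : ℕ, n ≤ (1 / 2 - ε) * (k : ℝ) ^ 2 →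
      ∀ σ : Fin n → Fin k, ¬ ∀ τ : Equiv.Perm (Fin k), IsBCP τ σ := by
  have hr : Real.exp (-2 * (ε / 2) ^ 2) < 1 :=
    Real.exp_lt_one_iff.mpr (mul_neg_of_neg_of_pos (by norm_num) (by positivity))
  filter_upwards [tendsto_sqrt_div_two_atTop.eventually_gt_atTop 0, eventually_sqrt_div_two_le hε,
    eventually_cube_mul_pow_sqrt_div_two_lt_one (Real.exp_pos _).le hr] with k hℓ hℓε hlt n hn σ hσ
  have hℓk : 2 * (k.sqrt / 2) ^ 2 ≤ k := by
    linarith [four_mul_sqrt_div_two_sq_le k, Nat.zero_le ((k.sqrt / 2) ^ 2)]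
  exact hlt.not_ge (one_le_of_forall_isBCP hσ hn hℓ hℓk hℓε)

end Asymptotics

/-- For every `ε > 0` and all sufficiently large `k`, no word `σ ∈ [k]^n` with
`n ≤ (1/2 − ε)k²` contains every `τ ∈ S_k` as a bi-directional circular pattern.
In particular, for large `k` there is no such `σ` with `n ≤ 3k²/8 + 1/2`,
refuting Gupta's conjecture. -/
theorem no_short_BCP_superpattern :
    (∀ ε : ℝ, 0 < ε → ∃ K : ℕ, ∀ k : ℕ, K ≤ k →
      ∀ n : ℕ, (n : ℝ) ≤ (1/2 - ε) * (k : ℝ)^2 →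
        ∀ σ : Fin n → Fin k, ¬ ∀ τ : Equiv.Perm (Fin k), IsBCP τ σ) ∧
    (∃ K : ℕ, ∀ k : ℕ, K ≤ k →
      ∀ n : ℕ, (n : ℝ) ≤ 3 * (k : ℝ)^2 / 8 + 1/2 →
        ∀ σ : Fin n → Fin k, ¬ ∀ τ : Equiv.Perm (Fin k), IsBCP τ σ) := by
  refine ⟨fun ε hε => Filter.eventually_atTop.mp (eventually_forall_not_forall_isBCP hε), ?_⟩
  obtain ⟨K, hK⟩ := Filter.eventually_atTop.mp
    (eventually_forall_not_forall_isBCP (ε := 1 / 16) (by norm_num))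
  refine ⟨max K 4, fun k hk n hn => hK k (le_of_max_le_left hk) n (hn.trans ?_)⟩
  have hk₄ : (4 : ℝ) ≤ k := by exact_mod_cast le_of_max_le_right hk
  nlinarith
end

section
/- For every positive integer k there exists a k-DFA A such that for every k-DFA B there is a bijection φ : S_k → S_k with c_A(root(A), τ) ≤ c_B(root(B), φ(τ)) for all τ ∈ S_k (reading permutations as words of length k). Consequently, for every n, |{τ ∈ S_k : c_B(root(B), τ) ≤ n}| ≤ |{τ ∈ S_k : c_A(root(A), τ) ≤ n}|. -/
/-!
The optimal automaton `A` remembers which letters are still unread and always charges these letters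
the smallest costs `1, …, r`. An arbitrary automaton charges the `r` letters it still has to read
`r` distinct costs; sorted increasingly, the `i`-th of these is at least `i`. Matching the two sets
of letters in order of cost gives a first letter that is no cheaper, and recursion on the remaining
letters turns these matchings into a bijection between the orderings of any two sets of the same
size.
-/

universe u

theorem fin_val_le_of_strictMono {n : ℕ} {f : Fin n → ℕ} (hf : StrictMono f) (i : Fin n) :
    (i : ℕ) ≤ f i :=
  calc (i : ℕ) = (Finset.Iio i).card := (Fin.card_Iio i).symm
    _ ≤ (Finset.range (f i)).card := Finset.card_le_card_of_injOn f
        (fun _ hj => Finset.mem_coe.2 (Finset.mem_range.2 (hf (Finset.mem_Iio.1 hj))))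
        hf.injective.injOn
    _ = f i := Finset.card_range _

theorem exists_fin_equiv_val_le {β : Type*} [Fintype β] {n : ℕ} (hn : Fintype.card β = n)
    {π : β → ℕ} (hπ : Function.Injective π) : ∃ e : Fin n ≃ β, ∀ i : Fin n, (i : ℕ) ≤ π (e i) := by
  let _ : LinearOrder β := LinearOrder.lift' π hπ
  let e := monoEquivOfFin β hn
  have mono_cost : StrictMono fun i => π (e i) := fun _ _ hij => e.strictMono hij
  exact ⟨e.toEquiv, fin_val_le_of_strictMono mono_cost⟩

theorem exists_equiv_le_of_lt_card {α β : Type*} [Fintype α] [Fintype β]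
    (h : Fintype.card α = Fintype.card β) {ρ : α → ℕ} (hρ : Function.Injective ρ)
    (hρ_lt : ∀ a, ρ a < Fintype.card α) {π : β → ℕ} (hπ : Function.Injective π) :
    ∃ σ : α ≃ β, ∀ a, ρ a ≤ π (σ a) := by
  let rank : α → Fin (Fintype.card α) := fun a => ⟨ρ a, hρ_lt a⟩
  have rank_bijective : Function.Bijective rank :=
    (Fintype.bijective_iff_injective_and_card rank).2
      ⟨fun _ _ hab => hρ (congrArg Fin.val hab), (Fintype.card_fin _).symm⟩
  obtain ⟨e, he⟩ := exists_fin_equiv_val_le h.symm hπ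
  exact ⟨(Equiv.ofBijective rank rank_bijective).trans e, fun a => he (rank a)⟩

theorem natCard_le_of_surjective_of_le {α β γ : Type*} [Finite α] [Preorder γ] {f : α → γ}
    {g : β → γ} {φ : α → β} (hφ : Function.Surjective φ) (h : ∀ a, f a ≤ g (φ a)) (c : γ) :
    Nat.card {b // g b ≤ c} ≤ Nat.card {a // f a ≤ c} := by
  have sublevel_subset : {b | g b ≤ c} ⊆ φ '' {a | f a ≤ c} := fun b hb => by
    obtain ⟨a, rfl⟩ := hφ b
    exact ⟨a, (h a).trans hb, rfl⟩
  exact (Set.ncard_le_ncard sublevel_subset).trans (Set.ncard_image_le (Set.toFinite _))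

/-- The orderings of the finite set `R`: words containing each element of `R` once and no other
letter, encoded as lists whose underlying multiset is `R`. -/
abbrev Arrangement {α : Type*} (R : Finset α) : Type _ :=
  {w : List α // (w : Multiset α) = R.val}

namespace Arrangement

variable {α : Type*}

theorem eq_nil (w : Arrangement (∅ : Finset α)) : w.1 = [] :=
  (Multiset.coe_eq_zero _).1 w.2

variable [DecidableEq α] {R : Finset α}

/-- The arrangement of `R` with first letter `t` that continues with `w`. -/
def cons (t : R) (w : Arrangement (R.erase t)) : Arrangement R :=
  ⟨t.1 :: w.1, by
    rw [← Multiset.cons_coe, w.2, Finset.erase_val, Multiset.cons_erase t.2]⟩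

theorem bijective_cons (hR : R.Nonempty) :
    Function.Bijective fun p : Σ t : R, Arrangement (R.erase t) => cons p.1 p.2 := by
  constructor
  · rintro ⟨⟨t, _⟩, ⟨w, _⟩⟩ ⟨⟨t', _⟩, ⟨w', _⟩⟩ h
    obtain ⟨rfl, rfl⟩ := List.cons.inj (congrArg Subtype.val h)
    rfl
  · rintro ⟨_ | ⟨t, w⟩, hw⟩
    · exact absurd (Finset.val_eq_zero.1 hw.symm) hR.ne_empty
    · have t_mem : t ∈ R := by simp [← Finset.mem_val, ← hw]
      have tail_eq : (w : Multiset α) = (R.erase t).val := by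
        rw [Finset.erase_val, ← hw, ← Multiset.cons_coe, Multiset.erase_cons_head]
      exact ⟨⟨⟨t, t_mem⟩, ⟨w, tail_eq⟩⟩, rfl⟩

/-- An arrangement of a nonempty set amounts to a first letter and an arrangement of the others. -/
noncomputable def consEquiv (hR : R.Nonempty) :
    (Σ t : R, Arrangement (R.erase t)) ≃ Arrangement R :=
  Equiv.ofBijective _ (bijective_cons hR)

end Arrangement

theorem coe_permWord {k : ℕ} (τ : Equiv.Perm (Fin k)) :
    (permWord τ : Multiset (Fin k)) = Finset.univ.val :=
  Multiset.map_univ_val_equiv τ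

theorem permWord_injective {k : ℕ} : Function.Injective (permWord (k := k)) := fun _ _ h =>
  Equiv.ext fun i => List.map_inj_left.1 h i (List.mem_finRange i)

theorem exists_permWord_eq {k : ℕ} {w : List (Fin k)}
    (hw : (w : Multiset (Fin k)) = Finset.univ.val) : ∃ τ, permWord τ = w := by
  have nodup : w.Nodup := Multiset.coe_nodup.1 (hw ▸ Finset.univ.nodup)
  have mem (t : Fin k) : t ∈ w := by rw [← Multiset.mem_coe, hw]; exact Finset.mem_univ t
  have length_eq : w.length = k := by
    rw [← Multiset.coe_card, hw, Finset.card_val, Finset.card_fin]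
  refine ⟨(finCongr length_eq.symm).trans (nodup.getEquivOfForallMemList w mem), ?_⟩
  exact List.ext_getElem (by simp [permWord, length_eq]) (by simp [permWord])

/-- Permutations of `[k]`, read as words, are the arrangements of the full alphabet. -/
noncomputable def permEquivArrangement (k : ℕ) :
    Equiv.Perm (Fin k) ≃ Arrangement (Finset.univ : Finset (Fin k)) :=
  Equiv.ofBijective (fun τ => ⟨permWord τ, coe_permWord τ⟩)
    ⟨fun _ _ h => permWord_injective (congrArg Subtype.val h),
      fun w => (exists_permWord_eq w.2).imp fun _ h => Subtype.ext h⟩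

/-- An ordering of the alphabet in which the letters of `R` come first; the order within `R`, and
among the other letters, is arbitrary. -/
noncomputable def frontRank {k : ℕ} (R : Finset (Fin k)) : Equiv.Perm (Fin k) :=
  (R.equivFin.trans (Fin.castLEquiv (card_finset_fin_le R))).extendSubtype

theorem frontRank_lt_card {k : ℕ} {R : Finset (Fin k)} {t : Fin k} (ht : t ∈ R) :
    (frontRank R t : ℕ) < R.card :=
  Equiv.extendSubtype_mem
    (R.equivFin.trans (Fin.castLEquiv (card_finset_fin_le R))) t ht

namespace WDFA

/-- The optimal automaton: its state is the set of unread letters, which are the cheapest ones. -/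
noncomputable def greedy (k : ℕ) : WDFA k (Finset (Fin k)) where
  trans R t := R.erase t
  root := Finset.univ
  cost R t := ((frontRank R t + 1 : ℕ) : ℕ∞)

theorem isKDFA_greedy (k : ℕ) : (greedy k).IsKDFA := fun R => ⟨frontRank R, fun _ => rfl⟩

variable {k : ℕ} {W : Type*} {B : WDFA k W}

theorem IsKDFA.exists_equiv_greedy_cost_le (hB : B.IsKDFA) {R S : Finset (Fin k)}
    (h : R.card = S.card) (b : W) :
    ∃ σ : R ≃ S, ∀ t : R, (greedy k).cost R t ≤ B.cost b (σ t) := by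
  obtain ⟨π, hπ⟩ := hB b
  obtain ⟨σ, hσ⟩ := exists_equiv_le_of_lt_card (by simpa using h)
    (ρ := fun t : R => (frontRank R t : ℕ))
    (Fin.val_injective.comp ((frontRank R).injective.comp Subtype.val_injective))
    (fun t => by simpa using frontRank_lt_card t.2)
    (π := fun s : S => (π s : ℕ))
    (Fin.val_injective.comp (π.injective.comp Subtype.val_injective))
  refine ⟨σ, fun t => ?_⟩
  rw [hπ]
  exact Nat.cast_le.2 (Nat.succ_le_succ (hσ t))

theorem IsKDFA.exists_equiv_greedy_wordCost_le (hB : B.IsKDFA) {R S : Finset (Fin k)}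
    (h : R.card = S.card) (b : W) :
    ∃ e : Arrangement R ≃ Arrangement S,
      ∀ w, (greedy k).wordCost R w.1 ≤ B.wordCost b (e w).1 := by
  induction R using Finset.strongInduction generalizing S b with
  | H R ih =>
    obtain rfl | hR := R.eq_empty_or_nonempty
    · obtain rfl : S = ∅ := Finset.card_eq_zero.1 h.symm
      exact ⟨Equiv.refl _, fun w => by simp [w.eq_nil, wordCost]⟩
    · have hS : S.Nonempty := Finset.card_pos.1 (h ▸ hR.card_pos)
      obtain ⟨σ, hσ⟩ := hB.exists_equiv_greedy_cost_le h b
      have card_erase (t : R) : (R.erase t).card = (S.erase (σ t)).card := by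
        rw [Finset.card_erase_of_mem t.2, Finset.card_erase_of_mem (σ t).2, h]
      choose f hf using fun t : R =>
        ih (R.erase t) (Finset.erase_ssubset t.2) (card_erase t) (B.trans b (σ t))
      let e := (Arrangement.consEquiv hR).symm.trans
        ((Equiv.sigmaCongr σ f).trans (Arrangement.consEquiv hS))
      refine ⟨e, fun w => ?_⟩
      obtain ⟨⟨t, w⟩, rfl⟩ := (Arrangement.consEquiv hR).surjective w
      have e_cons : e (Arrangement.consEquiv hR ⟨t, w⟩) = Arrangement.cons (σ t) (f t w) := by
        simp only [e, Equiv.trans_apply, Equiv.symm_apply_apply]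
        rfl
      rw [e_cons]
      exact add_le_add (hσ t) (hf t w)

end WDFA

theorem exists_optimal_kDFA_general (k : ℕ) :
    ∃ (V : Type) (_ : Fintype V) (A : WDFA k V), A.IsKDFA ∧
      ∀ (W : Type u) (B : WDFA k W), B.IsKDFA →
        (∃ φ : Equiv.Perm (Fin k) → Equiv.Perm (Fin k), Function.Bijective φ ∧
          ∀ τ : Equiv.Perm (Fin k),
            A.wordCost A.root (permWord τ) ≤ B.wordCost B.root (permWord (φ τ))) ∧
        ∀ n : ℕ,
          Nat.card {τ : Equiv.Perm (Fin k) // B.wordCost B.root (permWord τ) ≤ (n : ℕ∞)} ≤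
          Nat.card {τ : Equiv.Perm (Fin k) // A.wordCost A.root (permWord τ) ≤ (n : ℕ∞)} := by
  refine ⟨Finset (Fin k), inferInstance, .greedy k, WDFA.isKDFA_greedy k, fun W B hB => ?_⟩
  obtain ⟨e, he⟩ := hB.exists_equiv_greedy_wordCost_le (R := Finset.univ) rfl B.root
  let ι := permEquivArrangement k
  let φ : Equiv.Perm (Equiv.Perm (Fin k)) := ι.trans (e.trans ι.symm)
  have permWord_φ (τ) : permWord (φ τ) = (e (ι τ)).1 :=
    congrArg Subtype.val (ι.apply_symm_apply (e (ι τ)))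
  have cost_le (τ) : (WDFA.greedy k).wordCost Finset.univ (permWord τ) ≤
      B.wordCost B.root (permWord (φ τ)) := permWord_φ τ ▸ he (ι τ)
  exact ⟨⟨φ, φ.bijective, cost_le⟩,
    fun n => natCard_le_of_surjective_of_le φ.surjective cost_le (n : ℕ∞)⟩

/-- There is an "optimally cheap" `k`-DFA `A`: for every `k`-DFA `B` there is a
bijection `φ : S_k → S_k` with `c_A(root(A), τ) ≤ c_B(root(B), φ(τ))` for all `τ`;
consequently, for every `n`, `B` admits at most as many permutations of cost `≤ n`
as `A` does. -/
theorem exists_optimal_kDFA (k : ℕ) (hk : 0 < k) :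
    ∃ (V : Type) (_ : Fintype V) (A : WDFA k V), A.IsKDFA ∧
      ∀ (W : Type) [Fintype W], ∀ B : WDFA k W, B.IsKDFA →
        (∃ φ : Equiv.Perm (Fin k) → Equiv.Perm (Fin k), Function.Bijective φ ∧
          ∀ τ : Equiv.Perm (Fin k),
            A.wordCost A.root (permWord τ) ≤ B.wordCost B.root (permWord (φ τ))) ∧
        ∀ n : ℕ,
          Nat.card {τ : Equiv.Perm (Fin k) // B.wordCost B.root (permWord τ) ≤ (n : ℕ∞)} ≤
          Nat.card {τ : Equiv.Perm (Fin k) // A.wordCost A.root (permWord τ) ≤ (n : ℕ∞)} := by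
  obtain ⟨V, hV, A, hA, optimal⟩ := exists_optimal_kDFA_general k
  exact ⟨V, hV, A, hA, fun W _ => optimal W⟩
end

section
/- For all positive integers k and m, the word w ∈ [k]^{mk} obtained by concatenating m copies of the word (1, 2, …, k) contains as a pattern every permutation τ ∈ S_k having at least k − m ascents. -/
/-- The word of length `m·k` obtained by concatenating `m` copies of `(1, 2, …, k)`:
position `j` carries the letter `j mod k`. -/
def repeatedIdentity (k m : ℕ) (hk : 0 < k) : Fin (m * k) → Fin k :=
  fun j => ⟨(j : ℕ) % k, Nat.mod_lt _ hk⟩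

/-- The number of ascents of `τ ∈ S_k`: the number of `j ∈ {1,…,k−1}` with
`τ(j) < τ(j+1)` (indexed here by `j : Fin k` with `j+1 < k`). -/
noncomputable def ascentCount {k : ℕ} (τ : Equiv.Perm (Fin k)) : ℕ :=
  Nat.card {j : Fin k // ∃ h : (j : ℕ) + 1 < k, τ j < τ ⟨(j : ℕ) + 1, h⟩}

/-!
Cut a word `v` over `[k]` into its maximal ascending runs. Reading off the `q`-th run inside the
`q`-th copy of `(1, …, k)` embeds `v` as a subsequence of the repeated word, and it uses as many
copies as there are runs. Every run ends at a position that is not an ascent, so a word of length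
`n` has exactly `n` minus its number of ascents runs.
-/

theorem Iio_eq_insert_of_covBy {ι : Type*} [LinearOrder ι] [LocallyFiniteOrderBot ι] {i j : ι}
    (hij : i ⋖ j) : Finset.Iio j = insert i (Finset.Iio i) := by
  rw [Finset.Iio_insert]
  exact Finset.coe_injective (by simpa using hij.Iio_eq)

section Runs

variable {n : ℕ} {α : Type*}

/-- The ascents of a word `v`: the positions whose letter is smaller than the next one. The last
position is never an ascent. -/
def ascents [LT α] [DecidableLT α] (v : Fin n → α) : Finset (Fin n) :=
  {i | ∃ h : (i : ℕ) + 1 < n, v i < v ⟨i + 1, h⟩}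

/-- The number, counted from `0`, of the maximal ascending run of `v` containing position `j`:
each position before `j` that is not an ascent closes a run. -/
def runIndex [LT α] [DecidableLT α] (v : Fin n → α) (j : Fin n) : ℕ :=
  (Finset.Iio j \ ascents v).card

theorem ascentCount_eq_card_ascents {k : ℕ} (τ : Equiv.Perm (Fin k)) :
    ascentCount τ = (ascents τ).card :=
  Nat.subtype_card _ (by simp [ascents])

section LT

variable [LT α] [DecidableLT α] {v : Fin n → α} {i j : Fin n}

theorem mem_ascents_iff_of_covBy (hij : i ⋖ j) : i ∈ ascents v ↔ v i < v j := by
  have hsucc : (i : ℕ) + 1 = j := Nat.covBy_iff_add_one_eq.1 (Fin.covBy_iff.1 hij)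
  simp [ascents, hsucc]

theorem notMem_ascents_of_isMax (hi : IsMax i) : i ∉ ascents v := by
  simp only [ascents, Finset.mem_filter_univ, not_exists]
  exact fun h _ ↦ hi.not_lt (b := ⟨i + 1, h⟩) (Nat.lt_succ_self i)

theorem runIndex_eq_of_mem_ascents (hij : i ⋖ j) (hi : i ∈ ascents v) :
    runIndex v j = runIndex v i := by
  rw [runIndex, Iio_eq_insert_of_covBy hij, Finset.insert_sdiff_of_mem _ hi, runIndex]

theorem runIndex_eq_add_one_of_notMem_ascents (hij : i ⋖ j) (hi : i ∉ ascents v) :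
    runIndex v j = runIndex v i + 1 := by
  rw [runIndex, Iio_eq_insert_of_covBy hij, Finset.insert_sdiff_of_notMem _ hi,
    Finset.card_insert_of_notMem (by simp), runIndex]

theorem runIndex_lt_sub_card_ascents (v : Fin n → α) (j : Fin n) :
    runIndex v j < n - (ascents v).card := by
  let last : Fin n := ⟨n - 1, Nat.sub_one_lt_of_lt j.isLt⟩
  have hmax : IsMax last := fun b _ ↦ Nat.le_sub_one_of_lt b.isLt
  have hssub : Finset.Iio j \ ascents v ⊂ (ascents v)ᶜ :=
    (Finset.ssubset_iff_of_subset fun _ hi ↦ Finset.mem_compl.2 (Finset.mem_sdiff.1 hi).2).2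
      ⟨last, Finset.mem_compl.2 (notMem_ascents_of_isMax hmax), by simp [hmax.not_lt]⟩
  calc runIndex v j < (ascents v)ᶜ.card := Finset.card_lt_card hssub
    _ = n - (ascents v).card := by rw [Finset.card_compl, Fintype.card_fin]

end LT

theorem strictMono_toLex_runIndex [Preorder α] [DecidableLT α] (v : Fin n → α) :
    StrictMono fun j ↦ toLex (runIndex v j, v j) := by
  refine (strictMono_iff_forall_covBy _).2 fun i j hij ↦ Prod.Lex.toLex_lt_toLex.2 ?_
  by_cases hi : i ∈ ascents v
  · exact .inr ⟨(runIndex_eq_of_mem_ascents hij hi).symm, (mem_ascents_iff_of_covBy hij).1 hi⟩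
  · exact .inl (by simp [runIndex_eq_add_one_of_notMem_ascents hij hi])

end Runs

theorem finProdFinEquiv_lt_of_toLex_lt {m n : ℕ} {x y : Fin m × Fin n} (h : toLex x < toLex y) :
    finProdFinEquiv x < finProdFinEquiv y := by
  rw [Fin.lt_def, finProdFinEquiv_apply_val, finProdFinEquiv_apply_val]
  rcases Prod.Lex.toLex_lt_toLex.1 h with hfst | ⟨hfst, hsnd⟩
  · calc (x.2 : ℕ) + n * x.1 < n + n * x.1 := Nat.add_lt_add_right x.2.isLt _
      _ = n * (x.1 + 1) := by ring
      _ ≤ n * y.1 := Nat.mul_le_mul_left _ hfst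
      _ ≤ y.2 + n * y.1 := Nat.le_add_left _ _
  · rw [hfst]
    exact Nat.add_lt_add_right hsnd _

theorem repeatedIdentity_finProdFinEquiv {k m : ℕ} (hk : 0 < k) (q : Fin m) (a : Fin k) :
    repeatedIdentity k m hk (finProdFinEquiv (q, a)) = a :=
  congrArg Prod.snd (finProdFinEquiv.symm_apply_apply (q, a))

theorem repeatedIdentity_contains_high_ascent_general {k m n : ℕ} (hk : 0 < k) (v : Fin n → Fin k)
    (hasc : n - m ≤ (ascents v).card) :
    ∃ i : Fin n → Fin (m * k), StrictMono i ∧ ∀ j, repeatedIdentity k m hk (i j) = v j := by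
  have hrun (j : Fin n) : runIndex v j < m :=
    (runIndex_lt_sub_card_ascents v j).trans_le (by lia)
  refine ⟨fun j ↦ finProdFinEquiv (⟨runIndex v j, hrun j⟩, v j), fun i j hij ↦ ?_,
    fun j ↦ repeatedIdentity_finProdFinEquiv hk _ _⟩
  apply finProdFinEquiv_lt_of_toLex_lt
  simpa [Prod.Lex.toLex_lt_toLex] using strictMono_toLex_runIndex v hij

/-- The concatenation of `m` copies of `(1, …, k)` contains every `τ ∈ S_k` with at
least `k − m` ascents as a pattern. -/
theorem repeatedIdentity_contains_high_ascent (k m : ℕ) (hk : 0 < k) (hm : 0 < m)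
    (τ : Equiv.Perm (Fin k)) (hasc : k - m ≤ ascentCount τ) :
    ContainsPattern (repeatedIdentity k m hk) τ := by
  obtain ⟨i, hi, hword⟩ :=
    repeatedIdentity_contains_high_ascent_general hk τ (ascentCount_eq_card_ascents τ ▸ hasc)
  exact ⟨i, hi, fun j j' ↦ by rw [hword, hword]⟩
end

section
/- Let k be a positive integer and m = ⌈k/2⌉. The word w ∈ [k]^{mk} obtained by concatenating m copies of the word (1, 2, …, k) contains at least k!/2 permutations τ ∈ S_k as patterns. -/
open Finset

section Descents

variable {α β : Type*} [LinearOrder α] {n : ℕ}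

/-- The descent set of a finite sequence `f`: the position `i` stands for the step from entry `i`
to entry `i + 1`, indexing from `0`. -/
def descents (f : Fin (n + 1) → α) : Finset (Fin n) := {i | f i.succ < f i.castSucc}

/-- The descents of `f` that occur before its entry `j`. Their number is the index, from `0`, of
the maximal weakly increasing run of `f` containing `j`. -/
def descentsBefore (f : Fin (n + 1) → α) (j : Fin (n + 1)) : Finset (Fin n) :=
  {i ∈ descents f | i.castSucc < j}

theorem mem_descents {f : Fin (n + 1) → α} {i : Fin n} :
    i ∈ descents f ↔ f i.succ < f i.castSucc := by
  simp [descents]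

theorem descents_strictAnti_comp [LinearOrder β] {g : α → β} (hg : StrictAnti g)
    {f : Fin (n + 1) → α} (hf : f.Injective) : descents (g ∘ f) = (descents f)ᶜ := by
  ext i
  have hne : f i.castSucc ≠ f i.succ := hf.ne i.castSucc_lt_succ.ne
  simp only [mem_compl, mem_descents, Function.comp_apply, hg.lt_iff_gt, not_lt, hne.le_iff_lt]

theorem descentsBefore_subset_descents (f : Fin (n + 1) → α) (j : Fin (n + 1)) :
    descentsBefore f j ⊆ descents f :=
  filter_subset _ _

theorem descentsBefore_mono (f : Fin (n + 1) → α) : Monotone (descentsBefore f) :=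
  fun _ _ hij => monotone_filter_right _ fun _ _ h => h.trans_le hij

theorem descentsBefore_castSucc_ssubset_succ {f : Fin (n + 1) → α} {i : Fin n}
    (hi : i ∈ descents f) : descentsBefore f i.castSucc ⊂ descentsBefore f i.succ :=
  (ssubset_iff_of_subset (descentsBefore_mono f i.castSucc_lt_succ.le)).2
    ⟨i, by simp [descentsBefore, hi], by simp [descentsBefore]⟩

theorem strictMono_toLex_card_descentsBefore {f : Fin (n + 1) → α} (hf : f.Injective) :
    StrictMono fun j => toLex (#(descentsBefore f j), f j) := by
  refine Fin.strictMono_iff_lt_succ.2 fun i => Prod.Lex.toLex_lt_toLex'.2 ⟨?_, fun hcard => ?_⟩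
  · exact card_le_card (descentsBefore_mono f i.castSucc_lt_succ.le)
  · have hi : i ∉ descents f := fun hi =>
      (card_lt_card (descentsBefore_castSucc_ssubset_succ hi)).ne hcard
    exact (not_lt.1 (mem_descents.not.1 hi)).lt_of_ne (hf.ne i.castSucc_lt_succ.ne)

end Descents

theorem strictMono_lex_mul_add (k : ℕ) :
    StrictMono fun p : ℕ ×ₗ Fin k => k * (ofLex p).1 + (ofLex p).2 := by
  intro p q hpq
  rcases Prod.Lex.lt_iff.1 hpq with hlt | ⟨heq, hlt⟩
  · calc
      k * (ofLex p).1 + (ofLex p).2 < k * ((ofLex p).1 + 1) := by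
        rw [mul_add_one]
        exact Nat.add_lt_add_left (ofLex p).2.isLt _
      _ ≤ k * (ofLex q).1 := Nat.mul_le_mul_left k hlt
      _ ≤ k * (ofLex q).1 + (ofLex q).2 := Nat.le_add_right _ _
  · simpa only [heq, add_lt_add_iff_left, Fin.val_fin_lt] using hlt

theorem containsPattern_repeatedIdentity_of_strictMono {k m : ℕ} (hk : 0 < k)
    {τ : Equiv.Perm (Fin k)} {c : Fin k → ℕ} (hc : ∀ j, c j < m)
    (hmono : StrictMono fun j => toLex (c j, τ j)) :
    ContainsPattern (repeatedIdentity k m hk) τ := by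
  have hletter (j : Fin k) :
      repeatedIdentity k m hk (Fin.mkDivMod ⟨c j, hc j⟩ (τ j)) = τ j :=
    Fin.modNat_mkDivMod _ _
  refine ⟨fun j => Fin.mkDivMod ⟨c j, hc j⟩ (τ j), (strictMono_lex_mul_add k).comp hmono, ?_⟩
  simp only [hletter, implies_true]

theorem containsPattern_repeatedIdentity_of_card_descents_lt {n m : ℕ}
    {τ : Equiv.Perm (Fin (n + 1))} (hτ : #(descents τ) < m) :
    ContainsPattern (repeatedIdentity (n + 1) m n.succ_pos) τ :=
  containsPattern_repeatedIdentity_of_strictMono n.succ_pos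
    (fun j => (card_le_card (descentsBefore_subset_descents τ j)).trans_lt hτ)
    (strictMono_toLex_card_descentsBefore τ.injective)

theorem containsPattern_repeatedIdentity_or_revPerm_mul {k m : ℕ} (hk : 0 < k) (hkm : k ≤ 2 * m)
    (τ : Equiv.Perm (Fin k)) :
    ContainsPattern (repeatedIdentity k m hk) τ ∨
      ContainsPattern (repeatedIdentity k m hk) (Fin.revPerm * τ) := by
  obtain ⟨n, rfl⟩ := Nat.exists_eq_add_one.2 hk
  set σ : Equiv.Perm (Fin (n + 1)) := Fin.revPerm * τ
  have hcompl : descents σ = (descents τ)ᶜ :=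
    descents_strictAnti_comp Fin.rev_strictAnti τ.injective
  have hsum : #(descents τ) + #(descents σ) = n := by
    rw [hcompl, card_add_card_compl, Fintype.card_fin]
  have hlt : #(descents τ) < m ∨ #(descents σ) < m := by lia
  exact hlt.imp containsPattern_repeatedIdentity_of_card_descents_lt
    containsPattern_repeatedIdentity_of_card_descents_lt

theorem card_le_two_mul_card_subtype_of_or {α : Type*} [Finite α] {p : α → Prop} {g : α → α}
    (hg : g.Injective) (h : ∀ a, p a ∨ p (g a)) : Nat.card α ≤ 2 * Nat.card {a // p a} := by
  have hcover : {a | p a} ∪ {a | p (g a)} = Set.univ := Set.eq_univ_of_forall h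
  have hpreimage : Nat.card {a // p (g a)} ≤ Nat.card {a // p a} :=
    Nat.card_le_card_of_injective (Subtype.map g fun _ ha => ha) (Subtype.map_injective _ hg)
  calc
    Nat.card α = ({a | p a} ∪ {a | p (g a)}).ncard := by rw [hcover, Set.ncard_univ]
    _ ≤ Nat.card {a // p a} + Nat.card {a // p (g a)} := Set.ncard_union_le _ _
    _ ≤ 2 * Nat.card {a // p a} := by lia

/-- With `m = ⌈k/2⌉`, the concatenation of `m` copies of `(1, …, k)` contains at least
`k!/2` permutations `τ ∈ S_k` as patterns. -/
theorem repeatedIdentity_contains_half (k : ℕ) (hk : 0 < k) :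
    ((Nat.factorial k : ℝ)) / 2 ≤
      (Nat.card {τ : Equiv.Perm (Fin k) //
        ContainsPattern (repeatedIdentity k ((k + 1) / 2) hk) τ} : ℝ) := by
  have hcard := card_le_two_mul_card_subtype_of_or (mul_right_injective Fin.revPerm)
    (containsPattern_repeatedIdentity_or_revPerm_mul hk (m := (k + 1) / 2) (by lia))
  rw [Nat.card_perm, Nat.card_fin] at hcard
  rw [div_le_iff₀' two_pos]
  exact_mod_cast hcard
end
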